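/- There exists a constant C*>0 such that: (i) for every Ω satisfying (H) with Ω(θ)≥Ω(π/2)+C*·|θ−π/2|² for all θ∈[0,π], the measure ρ_{1D} is the unique minimizer of E_log up to translation; (ii) for every ω satisfying (h) and every constant c_ω>0 with ω(θ)≥c_ω·|θ−π/2|² for all θ∈[0,π], setting W_{log,α}(x)=−ln|x|+α·ω(θ(x))+|x|² with energy E_{log,α}, there exists a unique α*∈(0, C*/c_ω] such that for every α>α*, ρ_{1D} is the unique minimizer of E_{log,α} up to translation, and for every α with 0<α<α*, ρ_{1D} is not a minimizer of E_{log,α}. -/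

import Mathlib

/-!
The constant `C* = 7` works.

**One dimension.** The semicircle law `sg` is the unique minimizer, up to translation, of the energy
`E1` with kernel `-ln|t| + t²` (`semicircle_minimizer`). Write `sg` as the image under `-cos` of the
law `tau` with density `(2/π) sin² α` on `(0, π)`. Any other law is the image of `tau` under a
monotone map `T`. With `d = |cos α - cos β|` and `D = |T β - T α|`, the inequality
`-ln D ≥ -ln d + 1 - D / d` reduces the claim to a comparison of `∬ D / d` with `∬ D²`. The weak
Euler–Lagrange equation `∬ D / d = 2 ∬ D d` (`displacement_identity`) and `2 D d ≤ D² + d²` then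
conclude. The Euler–Lagrange equation itself is obtained without principal values: a layer-cake
decomposition of `T β - T α` reduces it to the quadrants `{α < γ < β}`, where both sides are
explicit multiples of `sin³ γ`.

**Strong anisotropy.** Averaging the one-dimensional kernel over the projections
`x ↦ x₂ + c x₁`, `|c| ≤ 1`, gives a kernel bounded by `-ln|x| + 6 cos² θ + |x|²` (`kernel_bound`).
Hence, if `Ω(θ) ≥ Ω(π/2) + 7 cos² θ`, the planar energy is at least the one of the vertical
semicircle plus `∬ cos² θ(x - y)`. The last term forces a minimizer onto a vertical line, where the
one-dimensional theorem applies. Since `|cos θ| ≤ |θ - π/2|`, this covers the hypothesis of the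
theorem.

**Threshold.** The angular term vanishes on the vertical semicircle, whose energy is therefore
independent of `α`. If it is a minimizer for `β`, then for `α > β` it is still a minimizer, and any
other minimizer has zero angular energy, hence also minimizes for the large parameters covered by
the previous step (`unique_of_minimizer`). So `α*` is the infimum of the parameters at which the
vertical semicircle is a minimizer. It is positive, because for a small angular profile splitting
the measure into two halves at horizontal distance `ε = 1/20` gains energy of order `ε` near the
diagonal and costs only `ε²` (`not_minimizer_of_small`).
-/

open MeasureTheory Real Filter Set Topology
open scoped ENNReal

noncomputable section

namespace Aniso

/-- The Euclidean norm on `ℝ × ℝ`. -/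
def nrm (x : ℝ × ℝ) : ℝ := Real.sqrt (x.1 ^ 2 + x.2 ^ 2)

/-- The angle `θ(x) ∈ [-π, π)` of a nonzero point `x ∈ ℝ²`,
so that `x / |x| = (cos (ang x), sin (ang x))`. -/
def ang (x : ℝ × ℝ) : ℝ :=
  if Complex.arg ⟨x.1, x.2⟩ = π then -π else Complex.arg ⟨x.1, x.2⟩

/-- The unit vector `e_φ = (cos φ, sin φ)`. -/
def eVec (φ : ℝ) : ℝ × ℝ := (Real.cos φ, Real.sin φ)

/-- The constant `τ_s = (2π)^{-s} Γ(s) cos(sπ/2)`. -/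
def tauC (s : ℝ) : ℝ := (2 * π) ^ (-s) * Real.Gamma s * Real.cos (s * π / 2)

/-- The constant `c_s = π^{s-1} Γ((2-s)/2) / Γ(s/2)`. -/
def cC (s : ℝ) : ℝ := π ^ (s - 1) * Real.Gamma ((2 - s) / 2) / Real.Gamma (s / 2)

/-- Hypothesis (H): `Ω` is smooth, 2π-periodic, strictly positive and π-periodic. -/
def SatisfiesH (Ω : ℝ → ℝ) : Prop :=
  ContDiff ℝ (⊤ : ℕ∞) Ω ∧ (∀ θ, Ω (θ + 2 * π) = Ω θ) ∧ (∀ θ, 0 < Ω θ) ∧ ∀ θ, Ω (θ + π) = Ω θ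

/-- Hypothesis (h): `ω` is smooth, 2π-periodic, nonnegative, not identically zero,
π-periodic, and `ω(π/2) = 0`. -/
def Satisfiesh (ω : ℝ → ℝ) : Prop :=
  ContDiff ℝ (⊤ : ℕ∞) ω ∧ (∀ θ, ω (θ + 2 * π) = ω θ) ∧ (∀ θ, 0 ≤ ω θ) ∧ (∃ θ, ω θ ≠ 0) ∧
    (∀ θ, ω (θ + π) = ω θ) ∧ ω (π / 2) = 0

/-- The transformed angle function `Ω̃`. -/
def Omt (s : ℝ) (Ω : ℝ → ℝ) (φ : ℝ) : ℝ :=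
  tauC (2 - s) * (∫ θ in (-π)..π, |Real.cos (φ - θ)| ^ (-2 + s) * (Ω θ - Ω (φ + π / 2)))
    + cC s * Ω (φ + π / 2)

/-- The interaction potential `W(x) = |x|^{-s} Ω(θ(x)) + |x|²` as an `[0,∞]`-valued
kernel, with `W(0) = ∞`. -/
def Wkernel (s : ℝ) (Ω : ℝ → ℝ) (x : ℝ × ℝ) : ℝ≥0∞ :=
  if x = 0 then ⊤ else ENNReal.ofReal (nrm x ^ (-s) * Ω (ang x) + nrm x ^ 2)

/-- The interaction energy `E[ρ] = (1/2) ∬ W(x-y) dρ(y) dρ(x) ∈ [0,∞]`. -/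
def energy (s : ℝ) (Ω : ℝ → ℝ) (ρ : Measure (ℝ × ℝ)) : ℝ≥0∞ :=
  (1 / 2 : ℝ≥0∞) * ∫⁻ x, ∫⁻ y, Wkernel s Ω (x - y) ∂ρ ∂ρ

/-- The real-valued interaction potential (with junk value `0` at the origin,
which is Lebesgue negligible). -/
def Wr (s : ℝ) (Ω : ℝ → ℝ) (x : ℝ × ℝ) : ℝ := nrm x ^ (-s) * Ω (ang x) + nrm x ^ 2

/-- `ρ` minimizes the energy `E` among probability measures on `ℝ²`. -/
def IsMinimizer (E : Measure (ℝ × ℝ) → ℝ≥0∞) (ρ : Measure (ℝ × ℝ)) : Prop :=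
  IsProbabilityMeasure ρ ∧ ∀ μ : Measure (ℝ × ℝ), IsProbabilityMeasure μ → E ρ ≤ E μ

/-- `ρ` is the unique minimizer of `E` up to translation: it is a minimizer and every
minimizer is a translate of it. -/
def IsUniqueMinimizer (E : Measure (ℝ × ℝ) → ℝ≥0∞) (ρ : Measure (ℝ × ℝ)) : Prop :=
  IsMinimizer E ρ ∧ ∀ μ, IsMinimizer E μ → ∃ v : ℝ × ℝ, μ = Measure.map (fun x => x + v) ρ

def R2 (s : ℝ) : ℝ := (8 * Real.sin (s * π / 2) / (s ^ 2 * (2 + s) * π)) ^ (-(1 / (s + 2)))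

def C2 (s : ℝ) : ℝ := 4 * Real.sin (s * π / 2) / (s ^ 2 * π ^ 2)

/-- The density `ρ₂(x) = C₂ (R₂² - |x|²)₊^{s/2}`. -/
def rho2 (s : ℝ) (x : ℝ × ℝ) : ℝ := C2 s * (max (R2 s ^ 2 - nrm x ^ 2) 0) ^ (s / 2)

def rho2meas (s : ℝ) : Measure (ℝ × ℝ) := volume.withDensity fun x => ENNReal.ofReal (rho2 s x)

/-- Counterclockwise rotation of `ℝ²` by the angle `η`. -/
def Rot (η : ℝ) (x : ℝ × ℝ) : ℝ × ℝ :=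
  (x.1 * Real.cos η - x.2 * Real.sin η, x.1 * Real.sin η + x.2 * Real.cos η)

/-- The measure `ρ_{a,b,η}`: the pushforward of `ρ₂(x) dx` under `x ↦ R_η (a x₁, b x₂)`. -/
def rhoE (s a b η : ℝ) : Measure (ℝ × ℝ) :=
  Measure.map (fun x => Rot η (a * x.1, b * x.2)) (rho2meas s)

/-- The measure `ρ_{a,b} = ρ_{a,b,0}`. -/
def rhoAB (s a b : ℝ) : Measure (ℝ × ℝ) := rhoE s a b 0

/-- The Beta function. -/
def BetaR (x y : ℝ) : ℝ := Real.Gamma x * Real.Gamma y / Real.Gamma (x + y)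

def C1 (s : ℝ) : ℝ := 2 * Real.cos (s * π / 2) / (s * (s + 1) * π)

def R1 (s : ℝ) : ℝ := (C1 s * BetaR (1 / 2) ((3 + s) / 2)) ^ (-(1 / (s + 2)))

/-- The density `ρ₁(t) = C₁ (R₁² - t²)₊^{(1+s)/2}` on `ℝ`. -/
def rho1 (s t : ℝ) : ℝ := C1 s * (max (R1 s ^ 2 - t ^ 2) 0) ^ ((1 + s) / 2)

def rho1meas (s : ℝ) : Measure ℝ := volume.withDensity fun t => ENNReal.ofReal (rho1 s t)

/-- The measure `ρ_{1D}`: the pushforward of `ρ₁(t) dt` under `t ↦ (0, t)`. -/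
def rho1D (s : ℝ) : Measure (ℝ × ℝ) := Measure.map (fun t : ℝ => ((0 : ℝ), t)) (rho1meas s)

/-- The support of a measure: points all of whose neighborhoods have positive measure. -/
def msupport {α : Type*} [TopologicalSpace α] [MeasurableSpace α] (μ : Measure α) : Set α :=
  {x | ∀ U ∈ 𝓝 x, 0 < μ U}

def Acoef (s : ℝ) (Ω : ℝ → ℝ) (a b : ℝ) : ℝ :=
  tauC s * (R1 s / R2 s) ^ (2 + s) *
    ∫ φ in (-π)..π,
      (a ^ 2 * Real.cos φ ^ 2 + b ^ 2 * Real.sin φ ^ 2) ^ (-(2 + s) / 2) *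
        Real.cos φ ^ 2 * Omt s Ω φ

def Bcoef (s : ℝ) (Ω : ℝ → ℝ) (a b : ℝ) : ℝ :=
  tauC s * (R1 s / R2 s) ^ (2 + s) *
    ∫ φ in (-π)..π,
      (a ^ 2 * Real.cos φ ^ 2 + b ^ 2 * Real.sin φ ^ 2) ^ (-(2 + s) / 2) *
        Real.sin φ ^ 2 * Omt s Ω φ

def Dcoef (s : ℝ) (Ω : ℝ → ℝ) (a b : ℝ) : ℝ :=
  tauC s * (R1 s / R2 s) ^ (2 + s) *
    ∫ φ in (-π)..π,
      (a ^ 2 * Real.cos φ ^ 2 + b ^ 2 * Real.sin φ ^ 2) ^ (-(2 + s) / 2) *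
        (Real.cos φ * Real.sin φ) * Omt s Ω φ

def Mfun (s : ℝ) (Ω : ℝ → ℝ) (a b : ℝ) : ℝ :=
  tauC s * (R1 s / R2 s) ^ (2 + s) *
    ∫ φ in (-π)..π, (a ^ 2 * Real.cos φ ^ 2 + b ^ 2 * Real.sin φ ^ 2) ^ (-s / 2) * Omt s Ω φ

def calE (s : ℝ) (Ω : ℝ → ℝ) (a b : ℝ) : ℝ := Mfun s Ω a b + s / 2 * (a ^ 2 + b ^ 2)

/-- A measure has compact support. -/
def HasCompactSupportM (ρ : Measure (ℝ × ℝ)) : Prop :=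
  ∃ K : Set (ℝ × ℝ), IsCompact K ∧ ρ Kᶜ = 0

/-- The linear interpolation `(1-t) ρ₀ + t ρ₁`. -/
def mix (ρ₀ ρ₁ : Measure (ℝ × ℝ)) (t : ℝ) : Measure (ℝ × ℝ) :=
  ENNReal.ofReal (1 - t) • ρ₀ + ENNReal.ofReal t • ρ₁

/-- Linear interpolation convexity (LIC): for any two distinct compactly supported
probability measures of finite energy with the same center of mass, the energy is
strictly convex along their linear interpolation. -/
def LIC (s : ℝ) (Ω : ℝ → ℝ) : Prop :=
  ∀ ρ₀ ρ₁ : Measure (ℝ × ℝ), IsProbabilityMeasure ρ₀ → IsProbabilityMeasure ρ₁ →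
    HasCompactSupportM ρ₀ → HasCompactSupportM ρ₁ →
    energy s Ω ρ₀ < ⊤ → energy s Ω ρ₁ < ⊤ → ρ₀ ≠ ρ₁ →
    (∫ x, x ∂ρ₀) = (∫ x, x ∂ρ₁) →
    StrictConvexOn ℝ (Set.Icc (0 : ℝ) 1) fun t => (energy s Ω (mix ρ₀ ρ₁ t)).toReal

/-- The interaction energy of a bounded compactly supported signed density. -/
def energyR (s : ℝ) (Ω : ℝ → ℝ) (μ : ℝ × ℝ → ℝ) : ℝ :=
  (1 / 2) * ∫ x : ℝ × ℝ, (∫ y : ℝ × ℝ, Wr s Ω (x - y) * μ y) * μ x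

/-- The logarithmic potential `W_log(x) = -ln|x| + Ω(θ(x)) + |x|²` (real valued,
with junk value at the origin). -/
def Wlog (Ω : ℝ → ℝ) (x : ℝ × ℝ) : ℝ := -Real.log (nrm x) + Ω (ang x) + nrm x ^ 2

def WlogKernel (Ω : ℝ → ℝ) (x : ℝ × ℝ) : ℝ≥0∞ :=
  if x = 0 then ⊤ else ENNReal.ofReal (Wlog Ω x)

/-- The logarithmic interaction energy. -/
def energyLog (Ω : ℝ → ℝ) (ρ : Measure (ℝ × ℝ)) : ℝ≥0∞ :=
  (1 / 2 : ℝ≥0∞) * ∫⁻ x, ∫⁻ y, WlogKernel Ω (x - y) ∂ρ ∂ρ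

/-- The family `W_{(s)}(x) = |x|^{-s} (1/s + Ω(θ(x))) - 1/s + |x|²`. -/
def Wsfam (s : ℝ) (Ω : ℝ → ℝ) (x : ℝ × ℝ) : ℝ :=
  nrm x ^ (-s) * (1 / s + Ω (ang x)) - 1 / s + nrm x ^ 2

/-- The transformed angle function of `W_{(s)}`. -/
def Omts (s : ℝ) (Ω : ℝ → ℝ) (φ : ℝ) : ℝ :=
  tauC (2 - s) * (∫ θ in (-π)..π, |Real.cos (φ - θ)| ^ (-2 + s) * (Ω θ - Ω (φ + π / 2)))
    + cC s * (1 / s + Ω (φ + π / 2))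

/-- The truncated integral appearing in the principal value defining `Ω̃_log`. -/
def pvInt (Ω : ℝ → ℝ) (φ δ : ℝ) : ℝ :=
  ∫ θ in {θ : ℝ | θ ∈ Set.Icc (-π) π ∧ δ ≤ |Real.cos (φ - θ)|},
    |Real.cos (φ - θ)| ^ (-(2 : ℝ)) * (Ω θ - Ω (φ + π / 2))

def OmtLogFam (Ω : ℝ → ℝ) (φ δ : ℝ) : ℝ :=
  -((2 * π) ^ (-(2 : ℝ))) * pvInt Ω φ δ + (2 * π)⁻¹

/-- The transformed angle function `Ω̃_log`, defined as the principal value limit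
(via `limUnder`, which returns the limit whenever it exists). -/
def OmtLog (Ω : ℝ → ℝ) (φ : ℝ) : ℝ := limUnder (𝓝[>] (0 : ℝ)) (OmtLogFam Ω φ)

/-- The closed elliptical region `B(0; a, b)`. -/
def ellipseSet (a b : ℝ) : Set (ℝ × ℝ) := {x | x.1 ^ 2 / a ^ 2 + x.2 ^ 2 / b ^ 2 ≤ 1}

def ALog (Ω : ℝ → ℝ) (a b : ℝ) : ℝ :=
  ∫ φ in (-π)..π,
    (a ^ 2 * Real.cos φ ^ 2 + b ^ 2 * Real.sin φ ^ 2)⁻¹ * Real.cos φ ^ 2 * OmtLog Ω φ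

def BLog (Ω : ℝ → ℝ) (a b : ℝ) : ℝ :=
  ∫ φ in (-π)..π,
    (a ^ 2 * Real.cos φ ^ 2 + b ^ 2 * Real.sin φ ^ 2)⁻¹ * Real.sin φ ^ 2 * OmtLog Ω φ

def DLog (Ω : ℝ → ℝ) (a b : ℝ) : ℝ :=
  ∫ φ in (-π)..π,
    (a ^ 2 * Real.cos φ ^ 2 + b ^ 2 * Real.sin φ ^ 2)⁻¹ *
      (Real.cos φ * Real.sin φ) * OmtLog Ω φ

/-- The uniform probability measure on the rotated ellipse `B(0; a, b, η)`. -/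
def unifEllipse (a b η : ℝ) : Measure (ℝ × ℝ) :=
  volume.withDensity ((Rot η '' ellipseSet a b).indicator fun _ => ENNReal.ofReal ((π * a * b)⁻¹))

/-- The pushforward of the density `(2/(πb²)) (b² - t²)₊^{1/2} dt` under `t ↦ R_η (0, t)`. -/
def semicirc (b η : ℝ) : Measure (ℝ × ℝ) :=
  Measure.map (fun t : ℝ => Rot η (0, t))
    (volume.withDensity fun t =>
      ENNReal.ofReal (2 / (π * b ^ 2) * (max (b ^ 2 - t ^ 2) 0) ^ ((1 : ℝ) / 2)))

/-- The vertical semicircle measure `ρ_{1D}` for the logarithmic case. -/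
def rho1Dlog : Measure (ℝ × ℝ) :=
  Measure.map (fun t : ℝ => ((0 : ℝ), t))
    (volume.withDensity fun t => ENNReal.ofReal (2 / π * (max (1 - t ^ 2) 0) ^ ((1 : ℝ) / 2)))

/-- The measure `ψ(t) dt` placed on the vertical axis. -/
def rhoPsi (ψ : ℝ → ℝ) : Measure (ℝ × ℝ) :=
  Measure.map (fun t : ℝ => ((0 : ℝ), t)) (volume.withDensity fun t => ENNReal.ofReal (ψ t))

/-! ### The semicircle law in the angular variable -/

/-- Fundamental theorem of calculus for a nonnegative integrand, in `ℝ≥0∞`; integrability up to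
the end points is automatic from the continuity of the primitive. -/
lemma lintegral_Ioo_of_deriv {a b : ℝ} (hab : a ≤ b) {F f : ℝ → ℝ}
    (hc : ContinuousOn F (Icc a b)) (hd : ∀ x ∈ Ioo a b, HasDerivAt F (f x) x)
    (hf : ∀ x ∈ Ioo a b, 0 ≤ f x) :
    ∫⁻ x in Ioo a b, ENNReal.ofReal (f x) = ENNReal.ofReal (F b - F a) := by
  have hi : IntegrableOn f (Ioc a b) := intervalIntegral.integrableOn_deriv_of_nonneg hc hd hf
  have hi' : IntegrableOn f (Ioo a b) := hi.mono_set Ioo_subset_Ioc_self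
  have h := intervalIntegral.integral_eq_sub_of_hasDerivAt_of_le hab hc hd
    ((intervalIntegrable_iff_integrableOn_Ioc_of_le hab).2 hi)
  rw [intervalIntegral.integral_of_le hab, integral_Ioc_eq_integral_Ioo] at h
  rw [← h, ofReal_integral_eq_lintegral_ofReal hi']
  exact (ae_restrict_iff' measurableSet_Ioo).2 (ae_of_all _ hf)

lemma le_of_deriv_Ioo {a b : ℝ} (hab : a ≤ b) {F f : ℝ → ℝ}
    (hc : ContinuousOn F (Icc a b)) (hd : ∀ x ∈ Ioo a b, HasDerivAt F (f x) x)
    (hf : ∀ x ∈ Ioo a b, 0 ≤ f x) : F a ≤ F b := by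
  refine monotoneOn_of_deriv_nonneg (convex_Icc a b) hc (fun x hx => ?_) (fun x hx => ?_)
    (left_mem_Icc.2 hab) (right_mem_Icc.2 hab) hab
  · rw [interior_Icc] at hx
    exact (hd x hx).differentiableAt.differentiableWithinAt
  · rw [interior_Icc] at hx
    rw [(hd x hx).deriv]
    exact hf x hx

/-- The law of `α ∈ (0, π)` for which `-cos α` has the semicircle law. -/
def tau : Measure ℝ :=
  (volume.restrict (Ioo 0 π)).withDensity fun α => ENNReal.ofReal (2 / π * sin α ^ 2)

lemma measurable_tau_density : Measurable fun α : ℝ => ENNReal.ofReal (2 / π * sin α ^ 2) := by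
  fun_prop

lemma lintegral_tau {f : ℝ → ℝ≥0∞} (hf : Measurable f) :
    ∫⁻ α, f α ∂tau = ∫⁻ α in Ioo 0 π, ENNReal.ofReal (2 / π * sin α ^ 2) * f α := by
  rw [tau, lintegral_withDensity_eq_lintegral_mul _ measurable_tau_density hf]
  rfl

lemma tau_ac : tau ≪ volume.restrict (Ioo 0 π) := withDensity_absolutelyContinuous _ _

lemma ae_tau_mem : ∀ᵐ α ∂tau, α ∈ Ioo 0 π :=
  tau_ac.ae_le (ae_restrict_mem measurableSet_Ioo)

lemma ae_tau_ne (γ : ℝ) : ∀ᵐ α ∂tau, α ≠ γ := by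
  have h : ∀ᵐ α ∂(volume.restrict (Ioo 0 π) : Measure ℝ), α ≠ γ :=
    ae_restrict_of_ae (Measure.ae_ne volume γ)
  exact tau_ac.ae_le h

lemma hasDerivAt_cdf (x : ℝ) :
    HasDerivAt (fun x => (x - sin x * cos x) / π) (2 / π * sin x ^ 2) x := by
  have h := ((hasDerivAt_id x).sub ((hasDerivAt_sin x).mul (hasDerivAt_cos x))).div_const π
  refine h.congr_deriv ?_
  have := sin_sq_add_cos_sq x
  field_simp
  linarith

/-- The distribution function of `tau`. -/
lemma tau_Ioo {b : ℝ} (h0 : 0 ≤ b) (hb : b ≤ π) :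
    tau (Ioo 0 b) = ENNReal.ofReal ((b - sin b * cos b) / π) := by
  rw [tau, withDensity_apply _ measurableSet_Ioo, Measure.restrict_restrict measurableSet_Ioo,
    inter_eq_left.2 (Ioo_subset_Ioo_right hb),
    lintegral_Ioo_of_deriv h0 (F := fun x => (x - sin x * cos x) / π)
      (by fun_prop) (fun x _ => hasDerivAt_cdf x) (fun x _ => by positivity)]
  simp

instance : IsProbabilityMeasure tau := by
  constructor
  have h : tau univ = tau (Ioo 0 π) := by
    apply measure_congr
    filter_upwards [ae_tau_mem] with α hα
    exact propext ⟨fun _ => hα, fun _ => trivial⟩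
  rw [h, tau_Ioo pi_pos.le le_rfl]
  simp [pi_ne_zero]

/-- The semicircle law on `ℝ`. -/
def sg : Measure ℝ := Measure.map (fun α => -cos α) tau

instance : IsProbabilityMeasure sg :=
  Measure.isProbabilityMeasure_map (by fun_prop)

lemma measurable_semicircle_density :
    Measurable fun t : ℝ => ENNReal.ofReal (2 / π * (max (1 - t ^ 2) 0) ^ ((1 : ℝ) / 2)) := by
  fun_prop

/-- The substitution `t = -cos α` turns `(2 / π) sin² α dα` into the semicircle density. -/
lemma sg_eq : sg =
    volume.withDensity fun t => ENNReal.ofReal (2 / π * (max (1 - t ^ 2) 0) ^ ((1 : ℝ) / 2)) := by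
  have him : (fun α : ℝ => -cos α) '' Ioo 0 π = Ioo (-1) 1 := by
    ext t
    constructor
    · rintro ⟨α, hα, rfl⟩
      have h1 := cos_lt_cos_of_nonneg_of_le_pi le_rfl hα.2.le hα.1
      have h2 := cos_lt_cos_of_nonneg_of_le_pi hα.1.le le_rfl hα.2
      simp only [cos_zero, cos_pi] at h1 h2
      constructor <;> simp <;> linarith
    · rintro ⟨h1, h2⟩
      refine ⟨arccos (-t), ⟨arccos_pos.2 (by linarith), ?_⟩, ?_⟩
      · refine lt_of_le_of_ne (arccos_le_pi _) fun h => ?_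
        rw [arccos_eq_pi] at h
        linarith
      · simp [cos_arccos (x := -t) (by linarith) (by linarith)]
  ext s hs
  have hpre : MeasurableSet ((fun α : ℝ => -cos α) ⁻¹' s) :=
    measurable_cos.neg hs
  rw [sg, Measure.map_apply (by fun_prop) hs, withDensity_apply _ hs, tau,
    withDensity_apply _ hpre, Measure.restrict_restrict hpre,
    ← lintegral_indicator hs]
  have h0 : ∫⁻ t, s.indicator (fun t : ℝ =>
      ENNReal.ofReal (2 / π * (max (1 - t ^ 2) 0) ^ ((1 : ℝ) / 2))) t =
      ∫⁻ t in Ioo (-1 : ℝ) 1, s.indicator (fun t : ℝ =>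
      ENNReal.ofReal (2 / π * (max (1 - t ^ 2) 0) ^ ((1 : ℝ) / 2))) t := by
    rw [← lintegral_indicator measurableSet_Ioo]
    refine lintegral_congr fun t => ?_
    by_cases ht : t ∈ Ioo (-1 : ℝ) 1
    · simp [ht]
    · rw [indicator_of_notMem ht]
      by_cases hs' : t ∈ s
      · have h1 : 1 - t ^ 2 ≤ 0 := by
          by_contra! h
          exact ht ⟨by nlinarith, by nlinarith⟩
        rw [indicator_of_mem hs', max_eq_right h1]
        simp
      · simp [hs']
  rw [h0, ← him, lintegral_image_eq_lintegral_abs_deriv_mul measurableSet_Ioo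
    (f := fun α => -cos α) (f' := fun α => sin α) (fun x _ => ((hasDerivAt_cos x).neg.congr_deriv (neg_neg _)).hasDerivWithinAt)
    (fun x hx y hy h => injOn_cos (Ioo_subset_Icc_self hx) (Ioo_subset_Icc_self hy)
      (by simpa using h))]
  rw [← Measure.restrict_restrict hpre, ← lintegral_indicator hpre]
  refine setLIntegral_congr_fun measurableSet_Ioo fun α hα => ?_
  have hsin : 0 < sin α := sin_pos_of_mem_Ioo hα
  by_cases hα' : -cos α ∈ s
  · rw [indicator_of_mem (by exact hα'), indicator_of_mem hα', ← ENNReal.ofReal_mul (by positivity)]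
    congr 1
    have h1 : 1 - (-cos α) ^ 2 = sin α ^ 2 := by rw [sin_sq]; ring
    rw [h1, max_eq_left (by positivity), ← sqrt_eq_rpow, sqrt_sq hsin.le, abs_of_pos hsin]
    ring
  · rw [indicator_of_notMem (by exact hα'), indicator_of_notMem hα', mul_zero]

lemma rho1Dlog_eq : rho1Dlog = Measure.map (fun t : ℝ => ((0 : ℝ), t)) sg := by
  rw [sg_eq]; rfl

/-! ### Trigonometric integrals over quadrants -/

lemma cos_sub_cos_half (α β : ℝ) :
    cos α - cos β = 2 * sin ((β + α) / 2) * sin ((β - α) / 2) := by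
  have h1 : cos α = cos ((β + α) / 2 - (β - α) / 2) := by ring_nf
  have h2 : cos β = cos ((β + α) / 2 + (β - α) / 2) := by ring_nf
  rw [h1, h2, cos_sub, cos_add]
  ring

lemma sin_eq_half (α β : ℝ) :
    sin α = sin ((β + α) / 2) * cos ((β - α) / 2) - cos ((β + α) / 2) * sin ((β - α) / 2) := by
  rw [← sin_sub]
  ring_nf

/-- `∂_β log (sin ((β + α) / 2) / sin ((β - α) / 2)) = - sin α / (cos α - cos β)`. -/
lemma hasDerivAt_logratio {α β : ℝ} (hp : sin ((β + α) / 2) ≠ 0) (hq : sin ((β - α) / 2) ≠ 0) :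
    HasDerivAt (fun β => log (sin ((β + α) / 2)) - log (sin ((β - α) / 2)))
      (-(sin α / (cos α - cos β))) β := by
  have e1 : HasDerivAt (fun β : ℝ => (β + α) / 2) (1 / 2) β :=
    ((hasDerivAt_id β).add_const α).div_const 2
  have e2 : HasDerivAt (fun β : ℝ => (β - α) / 2) (1 / 2) β :=
    ((hasDerivAt_id β).sub_const α).div_const 2
  refine ((e1.sin.log hp).sub (e2.sin.log hq)).congr_deriv ?_
  rw [cos_sub_cos_half, sin_eq_half α β]
  field_simp
  ring

/-- `∂_α log (sin ((γ + α) / 2) / sin ((γ - α) / 2)) = sin γ / (cos α - cos γ)`. -/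
lemma hasDerivAt_logratio' {α γ : ℝ} (hp : sin ((γ + α) / 2) ≠ 0) (hq : sin ((γ - α) / 2) ≠ 0) :
    HasDerivAt (fun α => log (sin ((γ + α) / 2)) - log (sin ((γ - α) / 2)))
      (sin γ / (cos α - cos γ)) α := by
  have e1 : HasDerivAt (fun α : ℝ => (γ + α) / 2) (1 / 2) α :=
    ((hasDerivAt_id α).const_add γ).div_const 2
  have e2 : HasDerivAt (fun α : ℝ => (γ - α) / 2) (-1 / 2) α :=
    ((hasDerivAt_id α).const_sub γ).div_const 2
  refine ((e1.sin.log hp).sub (e2.sin.log hq)).congr_deriv ?_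
  have h : sin γ = sin ((γ + α) / 2) * cos ((γ - α) / 2)
      + cos ((γ + α) / 2) * sin ((γ - α) / 2) := by
    rw [← sin_add]; ring_nf
  rw [cos_sub_cos_half, h]
  field_simp
  ring

lemma sin_half_pos {α β : ℝ} (h0 : 0 < α) (h : α < β) (hβ : β ≤ π) :
    0 < sin ((β + α) / 2) ∧ 0 < sin ((β - α) / 2) :=
  ⟨sin_pos_of_pos_of_lt_pi (by linarith) (by linarith),
    sin_pos_of_pos_of_lt_pi (by linarith) (by linarith)⟩

lemma cos_sub_cos_pos {α β : ℝ} (h0 : 0 < α) (h : α < β) (hβ : β ≤ π) : 0 < cos α - cos β := by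
  have := sin_half_pos h0 h hβ
  rw [cos_sub_cos_half]
  exact mul_pos (mul_pos two_pos this.1) this.2

lemma hasDerivAt_inner {α β : ℝ} (h0 : 0 < α) (h : α < β) (hβ : β ≤ π) :
    HasDerivAt (fun β => sin α ^ 2 * (-sin α * (log (sin ((β + α) / 2)) - log (sin ((β - α) / 2)))
        + cos α * β + sin β))
      (sin α ^ 2 * sin β ^ 2 / (cos α - cos β)) β := by
  have hs := sin_half_pos h0 h hβ
  have hc := cos_sub_cos_pos h0 h hβ
  refine (((((hasDerivAt_logratio hs.1.ne' hs.2.ne').const_mul (-sin α)).add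
    ((hasDerivAt_id β).const_mul (cos α))).add (hasDerivAt_sin β)).const_mul
      (sin α ^ 2)).congr_deriv ?_
  have h1 := sin_sq_add_cos_sq α
  have h2 := sin_sq_add_cos_sq β
  have h3 := hc.ne'
  field_simp
  linear_combination sin α ^ 2 * (h1 - h2)

/-- The value of the inner integral in `lintegral_inv_cos_sub`. -/
lemma lintegral_inner {α γ : ℝ} (h0 : 0 < α) (h : α < γ) (hγ : γ ≤ π) :
    0 ≤ sin α ^ 2 * (sin α * (log (sin ((γ + α) / 2)) - log (sin ((γ - α) / 2)))
        + cos α * (π - γ) - sin γ) ∧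
    ∫⁻ β in Ioo γ π, ENNReal.ofReal (sin α ^ 2 * sin β ^ 2 / (cos α - cos β)) =
      ENNReal.ofReal (sin α ^ 2 * (sin α * (log (sin ((γ + α) / 2)) - log (sin ((γ - α) / 2)))
        + cos α * (π - γ) - sin γ)) := by
  set F : ℝ → ℝ := fun β => sin α ^ 2 * (-sin α *
    (log (sin ((β + α) / 2)) - log (sin ((β - α) / 2))) + cos α * β + sin β) with hF
  have hd : ∀ β ∈ Icc γ π, HasDerivAt F (sin α ^ 2 * sin β ^ 2 / (cos α - cos β)) β :=
    fun β hβ => hasDerivAt_inner h0 (h.trans_le hβ.1) hβ.2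
  have hc : ContinuousOn F (Icc γ π) := fun β hβ => (hd β hβ).continuousAt.continuousWithinAt
  have hnn : ∀ β ∈ Ioo γ π, 0 ≤ sin α ^ 2 * sin β ^ 2 / (cos α - cos β) := fun β hβ => by
    have := cos_sub_cos_pos h0 (h.trans hβ.1) hβ.2.le
    positivity
  have hval : F π - F γ = sin α ^ 2 * (sin α *
      (log (sin ((γ + α) / 2)) - log (sin ((γ - α) / 2))) + cos α * (π - γ) - sin γ) := by
    have e : sin ((π + α) / 2) = sin ((π - α) / 2) := by
      rw [← sin_pi_sub]; ring_nf
    simp only [hF, e, sub_self, mul_zero, sin_pi]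
    ring
  constructor
  · rw [← hval]
    exact sub_nonneg.2 (le_of_deriv_Ioo hγ hc (fun β hβ => hd β (Ioo_subset_Icc_self hβ)) hnn)
  · rw [← hval]
    exact lintegral_Ioo_of_deriv hγ hc (fun β hβ => hd β (Ioo_subset_Icc_self hβ)) hnn

/-- The Euler–Lagrange equation of the semicircle law, integrated over the quadrant
`{α < γ < β}`: away from the singular diagonal only the corner `(γ, γ)` is critical, so no
principal value is needed. -/
lemma lintegral_inv_cos_sub {γ : ℝ} (h0 : 0 ≤ γ) (hγ : γ ≤ π) :
    ∫⁻ α in Ioo 0 γ, ∫⁻ β in Ioo γ π, ENNReal.ofReal (sin α ^ 2 * sin β ^ 2 / (cos α - cos β)) =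
      ENNReal.ofReal (π / 3 * sin γ ^ 3) := by
  rw [setLIntegral_congr_fun measurableSet_Ioo
    (fun α hα => (lintegral_inner hα.1 hα.2 hγ).2)]
  -- a primitive: integrate `sin α ^ 3` by parts against the logarithm, with the primitive of
  -- `sin α ^ 3` normalized to vanish at `γ`
  set H : ℝ → ℝ := fun α =>
    (-1 + (cos α ^ 2 + cos α * cos γ + cos γ ^ 2) / 3) * (2 *
      (sin ((γ + α) / 2) * log (sin ((γ + α) / 2)) * sin ((γ - α) / 2)
        - sin ((γ + α) / 2) * (sin ((γ - α) / 2) * log (sin ((γ - α) / 2)))))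
    + sin γ * (α - (α / 2 + sin α * cos α / 2) / 3 - sin α * cos γ / 3 - α * cos γ ^ 2 / 3)
    + (π - γ) * sin α ^ 3 / 3 - sin γ * (α / 2 - sin α * cos α / 2) with hH
  have hH' : H = fun α =>
      ((-cos α + cos α ^ 3 / 3) + (cos γ - cos γ ^ 3 / 3)) *
        (log (sin ((γ + α) / 2)) - log (sin ((γ - α) / 2)))
      + sin γ * (α - (α / 2 + sin α * cos α / 2) / 3 - sin α * cos γ / 3 - α * cos γ ^ 2 / 3)
      + (π - γ) * sin α ^ 3 / 3 - sin γ * (α / 2 - sin α * cos α / 2) := by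
    funext α
    simp only [hH]
    have e := cos_sub_cos_half α γ
    linear_combination (-1 + (cos α ^ 2 + cos α * cos γ + cos γ ^ 2) / 3) *
      (log (sin ((γ + α) / 2)) - log (sin ((γ - α) / 2))) * (-e)
  have hcont : Continuous H := by
    have c1 : Continuous fun α : ℝ => sin ((γ + α) / 2) * log (sin ((γ + α) / 2)) :=
      continuous_mul_log.comp (by fun_prop : Continuous fun α : ℝ => sin ((γ + α) / 2))
    have c2 : Continuous fun α : ℝ => sin ((γ - α) / 2) * log (sin ((γ - α) / 2)) :=
      continuous_mul_log.comp (by fun_prop : Continuous fun α : ℝ => sin ((γ - α) / 2))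
    simp only [hH]
    fun_prop
  rw [lintegral_Ioo_of_deriv h0 (F := H) hcont.continuousOn ?_
    (fun α hα => (lintegral_inner hα.1 hα.2 hγ).1)]
  · congr 1
    have h1 := sin_sq_add_cos_sq γ
    simp only [hH, sub_self, zero_div, sin_zero, cos_zero, add_zero, sub_zero, add_self_div_two]
    linear_combination (-γ / 3 * sin γ) * h1
  · intro α hα
    have hs := sin_half_pos hα.1 hα.2 hγ
    have hc := cos_sub_cos_pos hα.1 hα.2 hγ
    have hsin := hasDerivAt_sin α
    have hcos := hasDerivAt_cos α
    have hid := hasDerivAt_id α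
    have hL := hasDerivAt_logratio' hs.1.ne' hs.2.ne'
    have hG := ((hcos.neg.add ((hcos.pow 3).div_const 3)).add_const (cos γ - cos γ ^ 3 / 3)).mul hL
    have hP := ((((hid.sub (((hid.div_const 2).add ((hsin.mul hcos).div_const 2)).div_const 3)).sub
      ((hsin.mul_const (cos γ)).div_const 3)).sub
        ((hid.mul_const (cos γ ^ 2)).div_const 3)).const_mul (sin γ))
    have hR := (((hsin.pow 3).const_mul (π - γ)).div_const 3)
    have hQ := ((hid.div_const 2).sub ((hsin.mul hcos).div_const 2)).const_mul (sin γ)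
    rw [hH']
    refine (((hG.add hP).add hR).sub hQ).congr_deriv ?_
    have h1 := sin_sq_add_cos_sq α
    have h3 := hc.ne'
    simp only [Pi.neg_apply, Pi.add_apply, Pi.pow_apply]
    generalize log (sin ((γ + α) / 2)) - log (sin ((γ - α) / 2)) = L
    push_cast
    have hG' : (-cos α + cos α ^ 3 / 3 + (cos γ - cos γ ^ 3 / 3)) * (sin γ / (cos α - cos γ)) =
        (-1 + (cos α ^ 2 + cos α * cos γ + cos γ ^ 2) / 3) * sin γ := by
      field_simp
      ring
    rw [hG']
    linear_combination (-(sin α * L) + 2 / 3 * sin γ) * h1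

lemma hasDerivAt_sin_sq_primitive (x : ℝ) :
    HasDerivAt (fun x => (x - sin x * cos x) / 2) (sin x ^ 2) x := by
  refine (((hasDerivAt_id x).sub ((hasDerivAt_sin x).mul (hasDerivAt_cos x))).div_const
    2).congr_deriv ?_
  linear_combination (-1 / 2) * sin_sq_add_cos_sq x

lemma hasDerivAt_sin_sq_cos_primitive (x : ℝ) :
    HasDerivAt (fun x => sin x ^ 3 / 3) (sin x ^ 2 * cos x) x := by
  refine (((hasDerivAt_sin x).pow 3).div_const 3).congr_deriv ?_
  push_cast
  ring

/-- The quadratic counterpart of `lintegral_inv_cos_sub`, exactly half as large. -/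
lemma lintegral_cos_sub {γ : ℝ} (h0 : 0 ≤ γ) (hγ : γ ≤ π) :
    ∫⁻ α in Ioo 0 γ, ∫⁻ β in Ioo γ π, ENNReal.ofReal (sin α ^ 2 * sin β ^ 2 * (cos α - cos β)) =
      ENNReal.ofReal (π / 6 * sin γ ^ 3) := by
  have hin : ∀ α ∈ Ioo 0 γ,
      0 ≤ sin α ^ 2 * (cos α * ((π - γ + sin γ * cos γ) / 2) + sin γ ^ 3 / 3) ∧
      ∫⁻ β in Ioo γ π, ENNReal.ofReal (sin α ^ 2 * sin β ^ 2 * (cos α - cos β)) =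
      ENNReal.ofReal (sin α ^ 2 * (cos α * ((π - γ + sin γ * cos γ) / 2) + sin γ ^ 3 / 3)) := by
    intro α hα
    set F : ℝ → ℝ := fun β => sin α ^ 2 * (cos α * ((β - sin β * cos β) / 2) - sin β ^ 3 / 3)
      with hF
    have hc : ContinuousOn F (Icc γ π) := by fun_prop
    have hd : ∀ β ∈ Ioo γ π, HasDerivAt F (sin α ^ 2 * sin β ^ 2 * (cos α - cos β)) β := by
      intro β _
      refine ((((hasDerivAt_sin_sq_primitive β).const_mul (cos α)).sub
        (hasDerivAt_sin_sq_cos_primitive β)).const_mul (sin α ^ 2)).congr_deriv ?_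
      ring
    have hnn : ∀ β ∈ Ioo γ π, 0 ≤ sin α ^ 2 * sin β ^ 2 * (cos α - cos β) := by
      intro β hβ
      have := cos_sub_cos_pos hα.1 (hα.2.trans hβ.1) hβ.2.le
      positivity
    have hval : F π - F γ =
        sin α ^ 2 * (cos α * ((π - γ + sin γ * cos γ) / 2) + sin γ ^ 3 / 3) := by
      simp only [hF, sin_pi]
      ring
    rw [← hval]
    exact ⟨sub_nonneg.2 (le_of_deriv_Ioo hγ hc hd hnn), lintegral_Ioo_of_deriv hγ hc hd hnn⟩
  rw [setLIntegral_congr_fun measurableSet_Ioo (fun α hα => (hin α hα).2),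
    lintegral_Ioo_of_deriv h0 (F := fun α => sin α ^ 3 / 3 * ((π - γ + sin γ * cos γ) / 2)
      + (α - sin α * cos α) / 2 * (sin γ ^ 3 / 3)) (by fun_prop) (fun α _ => ?_)
      (fun α hα => (hin α hα).1)]
  · congr 1
    simp only [sin_zero]
    ring
  · refine (((hasDerivAt_sin_sq_cos_primitive α).mul_const _).add
      ((hasDerivAt_sin_sq_primitive α).mul_const _)).congr_deriv ?_
    ring

/-! ### Monotone transport and the layer-cake identity -/

lemma strictMonoOn_cdf : StrictMonoOn (fun x => (x - sin x * cos x) / π) (Icc 0 π) := by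
  refine strictMonoOn_of_deriv_pos (convex_Icc _ _) (by fun_prop) fun x hx => ?_
  rw [interior_Icc] at hx
  rw [(hasDerivAt_cdf x).deriv]
  have := sin_pos_of_mem_Ioo hx
  positivity

/-- The monotone rearrangement: every law on `ℝ` is the image of `tau` under a monotone map,
namely the quantile function of the law composed with the distribution function of `tau`. -/
lemma exists_monotone_transport (m : Measure ℝ) [IsProbabilityMeasure m] :
    ∃ T : ℝ → ℝ, Measurable T ∧ MonotoneOn T (Ioo 0 π) ∧ Measure.map T tau = m := by
  set F : ℝ → ℝ := fun x => (x - sin x * cos x) / π with hF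
  have hF0 : F 0 = 0 := by simp [hF]
  have hFpi : F π = 1 := by simp [hF, pi_ne_zero]
  have hFm : StrictMonoOn F (Icc 0 π) := strictMonoOn_cdf
  set G := ProbabilityTheory.cdf m
  set Q : ℝ → ℝ := fun α => sInf {x | F α ≤ G x} with hQ
  have hgal : ∀ α ∈ Ioo 0 π, ∀ x, Q α ≤ x ↔ F α ≤ G x := by
    intro α hα x
    have h0 : 0 < F α := by
      rw [← hF0]
      exact hFm (left_mem_Icc.2 pi_pos.le) (Ioo_subset_Icc_self hα) hα.1
    have h1 : F α < 1 := by
      rw [← hFpi]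
      exact hFm (Ioo_subset_Icc_self hα) (right_mem_Icc.2 pi_pos.le) hα.2
    have hne : {x | F α ≤ G x}.Nonempty :=
      ((ProbabilityTheory.tendsto_cdf_atTop m).eventually (eventually_ge_nhds h1)).exists
    have hbdd : BddBelow {x | F α ≤ G x} := by
      obtain ⟨z, hz⟩ :=
        ((ProbabilityTheory.tendsto_cdf_atBot m).eventually (eventually_lt_nhds h0)).exists
      refine ⟨z, fun y hy => ?_⟩
      by_contra! hlt
      exact absurd (hy.trans (G.mono hlt.le)) (not_le.2 hz)
    constructor
    · intro h
      have hc : Tendsto G (𝓝[>] x) (𝓝 (G x)) :=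
        (G.right_continuous x).tendsto.mono_left (nhdsWithin_mono _ Ioi_subset_Ici_self)
      refine ge_of_tendsto hc ?_
      filter_upwards [self_mem_nhdsWithin] with x' hx'
      obtain ⟨z, hz, hz'⟩ := exists_lt_of_csInf_lt hne (lt_of_le_of_lt h hx')
      exact le_trans hz (G.mono hz'.le)
    · intro h
      exact csInf_le hbdd h
  set T : ℝ → ℝ := (Ioo 0 π).indicator Q with hT
  have hTQ : ∀ α ∈ Ioo 0 π, T α = Q α := fun α hα => indicator_of_mem hα _
  have hTm : Measurable T := by
    refine measurable_of_Iic fun x => ?_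
    have : T ⁻¹' Iic x = (Ioo 0 π ∩ {α | F α ≤ G x}) ∪ ((Ioo 0 π)ᶜ ∩ {_α | 0 ≤ x}) := by
      ext α
      by_cases hα : α ∈ Ioo 0 π
      · simp only [mem_preimage, hTQ α hα, mem_Iic, hgal α hα x]
        simp [hα]
      · simp only [mem_preimage, hT, indicator_of_notMem hα, mem_Iic]
        simp only [mem_union, mem_inter_iff, hα, false_and, mem_compl_iff, not_false_eq_true,
          true_and, false_or, mem_ofPred_eq]
    rw [this]
    refine (measurableSet_Ioo.inter (measurableSet_le (by fun_prop) measurable_const)).union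
      (measurableSet_Ioo.compl.inter (MeasurableSet.const _))
  refine ⟨T, hTm, ?_, ?_⟩
  · intro α hα β hβ hab
    rw [hTQ α hα, hTQ β hβ, hgal α hα]
    exact (hFm.monotoneOn (Ioo_subset_Icc_self hα) (Ioo_subset_Icc_self hβ) hab).trans
      ((hgal β hβ _).1 le_rfl)
  · have : IsProbabilityMeasure (Measure.map T tau) :=
      Measure.isProbabilityMeasure_map hTm.aemeasurable
    refine Measure.ext_of_Iic _ _ fun x => ?_
    rw [Measure.map_apply hTm measurableSet_Iic, ← ProbabilityTheory.ofReal_cdf]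
    obtain ⟨b, hb, hbF⟩ : G x ∈ F '' Icc 0 π := by
      refine intermediate_value_Icc pi_pos.le (by fun_prop) ?_
      rw [hF0, hFpi]
      exact ⟨ProbabilityTheory.cdf_nonneg m x, ProbabilityTheory.cdf_le_one m x⟩
    have : tau (T ⁻¹' Iic x) = tau (Ioo 0 b) := by
      apply measure_congr
      filter_upwards [ae_tau_mem, ae_tau_ne b] with α hα hne
      refine propext ?_
      change T α ≤ x ↔ α ∈ Ioo 0 b
      rw [hTQ α hα, hgal α hα, ← hbF, hFm.le_iff_le (Ioo_subset_Icc_self hα) hb]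
      exact ⟨fun h => ⟨hα.1, lt_of_le_of_ne h hne⟩, fun h => h.2.le⟩
    rw [this, tau_Ioo hb.1 hb.2]
    exact congrArg _ hbF

/-- A monotone map has, up to null sets, half-lines as sub- and superlevel sets. -/
lemma exists_level {T : ℝ → ℝ} (hT : MonotoneOn T (Ioo 0 π)) (y : ℝ) :
    ∃ γ ∈ Icc 0 π, ({α | T α ≤ y} : Set ℝ) =ᵐ[tau] Iio γ ∧
      ({α | y < T α} : Set ℝ) =ᵐ[tau] Ioi γ := by
  set S : Set ℝ := insert 0 {α | α ∈ Ioo 0 π ∧ T α ≤ y} with hS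
  have hSle : ∀ α ∈ S, α ≤ π := by
    rintro α (rfl | hα)
    · exact pi_pos.le
    · exact hα.1.2.le
  have hbdd : BddAbove S := ⟨π, hSle⟩
  have hne : S.Nonempty := ⟨0, mem_insert _ _⟩
  have hγ : sSup S ∈ Icc 0 π := ⟨le_csSup hbdd (mem_insert _ _), csSup_le hne hSle⟩
  have key : ∀ᵐ α ∂tau, (T α ≤ y ↔ α < sSup S) ∧ (y < T α ↔ sSup S < α) := by
    filter_upwards [ae_tau_mem, ae_tau_ne (sSup S)] with α hα hn
    have h1 : T α ≤ y → α < sSup S := fun h =>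
      lt_of_le_of_ne (le_csSup hbdd (Or.inr ⟨hα, h⟩)) hn
    have h2 : α < sSup S → T α ≤ y := by
      intro h
      obtain ⟨β, hβ, hlt⟩ := exists_lt_of_lt_csSup hne h
      rcases hβ with rfl | hβ
      · exact absurd hα.1 (not_lt.2 hlt.le)
      · exact (hT hα hβ.1 hlt.le).trans hβ.2
    refine ⟨⟨h1, h2⟩, ⟨fun h => ?_, fun h => ?_⟩⟩
    · exact lt_of_le_of_ne (not_lt.1 fun h' => absurd (h2 h') (not_le.2 h)) hn.symm
    · exact not_le.1 fun h' => absurd (h1 h') (not_lt.2 h.le)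
  refine ⟨sSup S, hγ, ?_, ?_⟩
  · filter_upwards [key] with α hα
    exact propext hα.1
  · filter_upwards [key] with α hα
    exact propext hα.2

lemma lintegral_tau_quadrant {γ : ℝ} (hγ : γ ∈ Icc 0 π) {k : ℝ → ℝ → ℝ}
    (hk : Measurable (Function.uncurry k)) :
    ∫⁻ α in Iio γ, ∫⁻ β in Ioi γ, ENNReal.ofReal (k α β) ∂tau ∂tau =
      ENNReal.ofReal (2 / π) ^ 2 * ∫⁻ α in Ioo 0 γ, ∫⁻ β in Ioo γ π,
        ENNReal.ofReal (sin α ^ 2 * sin β ^ 2 * k α β) := by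
  have h1 : tau.restrict (Iio γ) = (volume.restrict (Ioo 0 γ)).withDensity
      fun α => ENNReal.ofReal (2 / π * sin α ^ 2) := by
    rw [tau, restrict_withDensity measurableSet_Iio, Measure.restrict_restrict measurableSet_Iio]
    suffices h : Iio γ ∩ Ioo 0 π = Ioo 0 γ by rw [h]
    ext x
    simp only [mem_inter_iff, mem_Iio, mem_Ioo]
    exact ⟨fun h => ⟨h.2.1, h.1⟩, fun h => ⟨h.2, h.1, h.2.trans_le hγ.2⟩⟩
  have h2 : tau.restrict (Ioi γ) = (volume.restrict (Ioo γ π)).withDensity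
      fun α => ENNReal.ofReal (2 / π * sin α ^ 2) := by
    rw [tau, restrict_withDensity measurableSet_Ioi, Measure.restrict_restrict measurableSet_Ioi]
    suffices h : Ioi γ ∩ Ioo 0 π = Ioo γ π by rw [h]
    ext x
    simp only [mem_inter_iff, mem_Ioi, mem_Ioo]
    exact ⟨fun h => ⟨h.1, h.2.2⟩, fun h => ⟨h.1, hγ.1.trans_lt h.1, h.2⟩⟩
  have hk' : Measurable fun p : ℝ × ℝ => ENNReal.ofReal (k p.1 p.2) :=
    ENNReal.measurable_ofReal.comp hk
  have hkm : ∀ α, Measurable fun β => ENNReal.ofReal (k α β) := fun α =>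
    hk'.comp measurable_prodMk_left
  have hin : Measurable fun α => ∫⁻ β, ENNReal.ofReal (k α β)
      ∂((volume.restrict (Ioo γ π)).withDensity fun α => ENNReal.ofReal (2 / π * sin α ^ 2)) :=
    hk'.lintegral_prod_right'
  rw [h1, h2, lintegral_withDensity_eq_lintegral_mul _ measurable_tau_density hin,
    ← lintegral_const_mul' _ _ (by simp)]
  refine lintegral_congr fun α => ?_
  simp only [Pi.mul_apply]
  rw [lintegral_withDensity_eq_lintegral_mul _ measurable_tau_density (hkm α),
    ← lintegral_const_mul' _ _ (by simp), ← lintegral_const_mul' _ _ (by simp)]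
  refine lintegral_congr fun β => ?_
  have hpi : 0 ≤ 2 / π := by positivity
  simp only [Pi.mul_apply]
  rw [ENNReal.ofReal_mul hpi, ENNReal.ofReal_mul hpi, ENNReal.ofReal_mul (by positivity),
    ENNReal.ofReal_mul (by positivity)]
  ring

/-- `tau` integrates `1 / Δs` and `2 Δs` to the same value over each quadrant
`{α < γ < β}`. -/
lemma quadrant_identity {γ : ℝ} (hγ : γ ∈ Icc 0 π) :
    ∫⁻ α in Iio γ, ∫⁻ β in Ioi γ, ENNReal.ofReal (1 / (cos α - cos β)) ∂tau ∂tau =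
    2 * ∫⁻ α in Iio γ, ∫⁻ β in Ioi γ, ENNReal.ofReal (cos α - cos β) ∂tau ∂tau := by
  rw [lintegral_tau_quadrant hγ (k := fun α β => 1 / (cos α - cos β)) (by
      unfold Function.uncurry; fun_prop),
    lintegral_tau_quadrant hγ (k := fun α β => cos α - cos β) (by
      unfold Function.uncurry; fun_prop), lintegral_cos_sub hγ.1 hγ.2]
  simp only [mul_one_div]
  rw [lintegral_inv_cos_sub hγ.1 hγ.2, mul_left_comm]
  congr 1
  have h2 : (2 : ℝ≥0∞) = ENNReal.ofReal 2 := by simp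
  rw [h2, ← ENNReal.ofReal_mul (by norm_num)]
  congr 1
  ring

/-- Layer-cake decomposition of the increments of a monotone map. -/
lemma lintegral_increment {T : ℝ → ℝ} (hTm : Measurable T) {k : ℝ → ℝ → ℝ}
    (hk : Measurable (Function.uncurry k)) :
    ∫⁻ α, ∫⁻ β, ENNReal.ofReal (T β - T α) * ENNReal.ofReal (k α β) ∂tau ∂tau =
      ∫⁻ y, ∫⁻ α in {α | T α ≤ y}, ∫⁻ β in {β | y < T β}, ENNReal.ofReal (k α β) ∂tau ∂tau := by
  have hk' : Measurable fun p : ℝ × ℝ => ENNReal.ofReal (k p.1 p.2) :=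
    ENNReal.measurable_ofReal.comp hk
  have hA : ∀ y, MeasurableSet {α | T α ≤ y} := fun y => measurableSet_le hTm measurable_const
  have hB : ∀ y, MeasurableSet {α | y < T α} := fun y => measurableSet_lt measurable_const hTm
  have e1 : ∀ α β, ENNReal.ofReal (T β - T α) * ENNReal.ofReal (k α β) =
      ∫⁻ y, {q : ℝ × ℝ × ℝ | T q.1 ≤ q.2.2 ∧ q.2.2 < T q.2.1}.indicator
        (fun q => ENNReal.ofReal (k q.1 q.2.1)) (α, β, y) := by
    intro α β
    have : ∀ y, {q : ℝ × ℝ × ℝ | T q.1 ≤ q.2.2 ∧ q.2.2 < T q.2.1}.indicator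
        (fun q => ENNReal.ofReal (k q.1 q.2.1)) (α, β, y) =
        (Ico (T α) (T β)).indicator (fun _ => ENNReal.ofReal (k α β)) y := fun y => rfl
    simp_rw [this]
    rw [lintegral_indicator_const measurableSet_Ico, Real.volume_Ico, mul_comm]
  have hmeas : Measurable ({q : ℝ × ℝ × ℝ | T q.1 ≤ q.2.2 ∧ q.2.2 < T q.2.1}.indicator
        (fun q => ENNReal.ofReal (k q.1 q.2.1))) := by
    refine Measurable.indicator (hk'.comp (by fun_prop : Measurable fun q : ℝ × ℝ × ℝ =>
      (q.1, q.2.1))) ?_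
    exact (measurableSet_le (hTm.comp measurable_fst) measurable_snd.snd).inter
      (measurableSet_lt measurable_snd.snd (hTm.comp measurable_snd.fst))
  simp_rw [e1]
  have s1 : ∀ α, ∫⁻ β, ∫⁻ y, {q : ℝ × ℝ × ℝ | T q.1 ≤ q.2.2 ∧ q.2.2 < T q.2.1}.indicator
        (fun q => ENNReal.ofReal (k q.1 q.2.1)) (α, β, y) ∂volume ∂tau =
      ∫⁻ y, ∫⁻ β, {q : ℝ × ℝ × ℝ | T q.1 ≤ q.2.2 ∧ q.2.2 < T q.2.1}.indicator
        (fun q => ENNReal.ofReal (k q.1 q.2.1)) (α, β, y) ∂tau ∂volume := fun α =>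
    lintegral_lintegral_swap (hmeas.comp (by fun_prop :
      Measurable fun p : ℝ × ℝ => (α, p.1, p.2))).aemeasurable
  simp_rw [s1]
  have hm2 : Measurable fun p : ℝ × ℝ => ∫⁻ β,
      {q : ℝ × ℝ × ℝ | T q.1 ≤ q.2.2 ∧ q.2.2 < T q.2.1}.indicator
        (fun q => ENNReal.ofReal (k q.1 q.2.1)) (p.1, β, p.2) ∂tau :=
    (hmeas.comp (by fun_prop : Measurable fun r : (ℝ × ℝ) × ℝ =>
      (r.1.1, r.2, r.1.2))).lintegral_prod_right'
  rw [lintegral_lintegral_swap hm2.aemeasurable]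
  refine lintegral_congr fun y => ?_
  rw [← lintegral_indicator (hA y)]
  refine lintegral_congr fun α => ?_
  by_cases hα : T α ≤ y
  · rw [indicator_of_mem (by exact hα), ← lintegral_indicator (hB y)]
    refine lintegral_congr fun β => ?_
    by_cases hβ : y < T β
    · rw [indicator_of_mem (by exact ⟨hα, hβ⟩), indicator_of_mem (by exact hβ)]
    · rw [indicator_of_notMem (by exact fun h => hβ h.2), indicator_of_notMem (by exact hβ)]
  · rw [indicator_of_notMem (by exact hα)]
    simp only [indicator, mem_ofPred_eq, hα, false_and, if_false,
      lintegral_zero]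

/-- `quadrant_identity` integrated over the levels of `T`: the quadrant `{α < γ < β}` is
`{T α ≤ y < T β}` up to null sets. -/
lemma increment_identity {T : ℝ → ℝ} (hTm : Measurable T) (hT : MonotoneOn T (Ioo 0 π)) :
    ∫⁻ α, ∫⁻ β, ENNReal.ofReal (T β - T α) * ENNReal.ofReal (1 / (cos α - cos β)) ∂tau ∂tau =
    2 * ∫⁻ α, ∫⁻ β, ENNReal.ofReal (T β - T α) * ENNReal.ofReal (cos α - cos β) ∂tau ∂tau := by
  rw [lintegral_increment hTm (k := fun α β => 1 / (cos α - cos β)) (by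
      unfold Function.uncurry; fun_prop),
    lintegral_increment hTm (k := fun α β => cos α - cos β) (by
      unfold Function.uncurry; fun_prop), ← lintegral_const_mul' _ _ (by simp)]
  refine lintegral_congr fun y => ?_
  obtain ⟨γ, hγ, h1, h2⟩ := exists_level hT y
  rw [Measure.restrict_congr_set h1, Measure.restrict_congr_set h2]
  exact quadrant_identity hγ

/-! ### The one-dimensional minimization problem -/

/-- The one-dimensional potential `-ln|t| + t²` as an `[0, ∞]`-valued kernel. -/
def w1 (t : ℝ) : ℝ≥0∞ := if t = 0 then ⊤ else ENNReal.ofReal (-log t + t ^ 2)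

/-- Twice the one-dimensional energy. -/
def E1 (m : Measure ℝ) : ℝ≥0∞ := ∫⁻ x, ∫⁻ y, w1 (x - y) ∂m ∂m

lemma measurable_w1 : Measurable w1 := by
  unfold w1
  exact Measurable.ite (measurableSet_singleton 0) measurable_const (by fun_prop)

lemma log_le_half_sq {t : ℝ} (ht : t ≠ 0) : log t ≤ t ^ 2 / 2 - 1 / 2 := by
  have h := log_le_sub_one_of_pos (by positivity : 0 < t ^ 2)
  rw [log_pow] at h
  push_cast at h
  linarith

lemma w1_of_ne {t : ℝ} (ht : t ≠ 0) : w1 t = ENNReal.ofReal (-log t + t ^ 2) := if_neg ht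

lemma w1_nonneg {t : ℝ} (ht : t ≠ 0) : 0 ≤ -log t + t ^ 2 := by
  have := log_le_half_sq ht
  nlinarith [sq_nonneg t]

lemma half_sq_le_w1 (t : ℝ) : ENNReal.ofReal (t ^ 2 / 2) ≤ w1 t := by
  by_cases ht : t = 0
  · simp [w1, ht]
  · rw [w1_of_ne ht]
    apply ENNReal.ofReal_le_ofReal
    have := log_le_half_sq ht
    linarith

lemma w1_abs (t : ℝ) : w1 |t| = w1 t := by
  simp [w1]

lemma w1_neg (t : ℝ) : w1 (-t) = w1 t := by
  simp [w1]

/-- The tangent-line inequality `-ln (e / d) ≥ 1 - e / d` behind displacement convexity. -/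
lemma w1_tangent {d e : ℝ} (hd : 0 < d) (he : 0 ≤ e) :
    w1 d + 1 + ENNReal.ofReal (e ^ 2) ≤
      w1 e + ENNReal.ofReal (e / d) + ENNReal.ofReal (d ^ 2) := by
  rcases he.eq_or_lt with rfl | he
  · simp [w1]
  · rw [w1_of_ne hd.ne', w1_of_ne he.ne', ← ENNReal.ofReal_one,
      ← ENNReal.ofReal_add (w1_nonneg hd.ne') zero_le_one,
      ← ENNReal.ofReal_add (add_nonneg (w1_nonneg hd.ne') zero_le_one) (by positivity),
      ← ENNReal.ofReal_add (w1_nonneg he.ne') (by positivity),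
      ← ENNReal.ofReal_add (add_nonneg (w1_nonneg he.ne') (by positivity)) (by positivity)]
    apply ENNReal.ofReal_le_ofReal
    have h := log_le_sub_one_of_pos (div_pos he hd)
    rw [log_div he.ne' hd.ne'] at h
    linarith

lemma E1_map {T : ℝ → ℝ} (hT : Measurable T) {τ : Measure ℝ} [SFinite τ] :
    E1 (Measure.map T τ) = ∫⁻ p, w1 (T p.2 - T p.1) ∂τ.prod τ := by
  have h2 : Measurable fun p : ℝ × ℝ => w1 (T p.2 - T p.1) :=
    measurable_w1.comp (by fun_prop)
  have h3 : Measurable fun p : ℝ × ℝ => w1 (p.1 - p.2) := measurable_w1.comp (by fun_prop)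
  rw [lintegral_prod _ h2.aemeasurable, E1, lintegral_map h3.lintegral_prod_right' hT]
  refine lintegral_congr fun x => ?_
  have h4 : Measurable fun y => w1 (T x - y) := measurable_w1.comp (by fun_prop)
  change ∫⁻ y, w1 (T x - y) ∂Measure.map T τ = ∫⁻ y, w1 (T y - T x) ∂τ
  rw [lintegral_map h4 hT]
  refine lintegral_congr fun y => ?_
  rw [← w1_neg, neg_sub]

lemma ae_prod_tau : ∀ᵐ p ∂tau.prod tau, p.1 ∈ Ioo 0 π ∧ p.2 ∈ Ioo 0 π ∧ p.1 ≠ p.2 := by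
  have h1 : ∀ᵐ p ∂tau.prod tau, p.1 ∈ Ioo 0 π :=
    Measure.quasiMeasurePreserving_fst.ae ae_tau_mem
  have h2 : ∀ᵐ p ∂tau.prod tau, p.2 ∈ Ioo 0 π :=
    Measure.quasiMeasurePreserving_snd.ae ae_tau_mem
  have h3 : ∀ᵐ p ∂tau.prod tau, p.1 ≠ p.2 := by
    refine (Measure.ae_prod_iff_ae_ae
      (measurableSet_eq_fun measurable_fst measurable_snd).compl).2 ?_
    refine ae_of_all _ fun x => ?_
    filter_upwards [ae_tau_ne x] with y hy
    exact hy.symm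
  filter_upwards [h1, h2, h3] with p a b c
  exact ⟨a, b, c⟩

lemma cos_sub_ne {α β : ℝ} (hα : α ∈ Ioo 0 π) (hβ : β ∈ Ioo 0 π) (h : α ≠ β) :
    cos α - cos β ≠ 0 := by
  rcases lt_or_gt_of_ne h with h | h
  · exact (cos_sub_cos_pos hα.1 h hβ.2.le).ne'
  · have := cos_sub_cos_pos hβ.1 h hα.2.le
    linarith

/-- The weak form of the Euler–Lagrange equation of the semicircle law, tested with the
displacement `T`. -/
lemma displacement_identity {T : ℝ → ℝ} (hTm : Measurable T) (hT : MonotoneOn T (Ioo 0 π)) :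
    ∫⁻ p, ENNReal.ofReal (|T p.2 - T p.1| / |cos p.1 - cos p.2|) ∂tau.prod tau =
    ∫⁻ p, ENNReal.ofReal (2 * (|T p.2 - T p.1| * |cos p.1 - cos p.2|)) ∂tau.prod tau := by
  have half : ∀ k : ℝ → ℝ, Measurable k →
      (∀ t, k |t| = |k t|) → (∀ t, 0 ≤ t → 0 ≤ k t) →
      ∫⁻ p, ENNReal.ofReal (|T p.2 - T p.1| * k |cos p.1 - cos p.2|) ∂tau.prod tau =
      2 * ∫⁻ α, ∫⁻ β, ENNReal.ofReal (T β - T α) * ENNReal.ofReal (k (cos α - cos β))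
        ∂tau ∂tau := by
    intro k hk hka hk0
    set f : ℝ × ℝ → ℝ≥0∞ := fun p =>
      ENNReal.ofReal (T p.2 - T p.1) * ENNReal.ofReal (k (cos p.1 - cos p.2)) with hf
    have hfm : Measurable f := by
      have := hk.comp (by fun_prop : Measurable fun p : ℝ × ℝ => cos p.1 - cos p.2)
      simp only [Function.comp_def] at this
      exact Measurable.mul (by fun_prop) this.ennreal_ofReal
    have e : ∫⁻ α, ∫⁻ β, ENNReal.ofReal (T β - T α) * ENNReal.ofReal (k (cos α - cos β))
        ∂tau ∂tau = ∫⁻ p, f p ∂tau.prod tau := (lintegral_prod f hfm.aemeasurable).symm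
    have e2 : ∫⁻ p, f p ∂tau.prod tau = ∫⁻ p, f p.swap ∂tau.prod tau :=
      (lintegral_prod_swap f).symm
    rw [e, two_mul]
    nth_rw 2 [e2]
    rw [← lintegral_add_left hfm]
    refine lintegral_congr_ae ?_
    filter_upwards [ae_prod_tau] with p ⟨h1, h2, h3⟩
    simp only [hf, Prod.swap]
    rcases lt_or_gt_of_ne h3 with h | h
    · have hc := cos_sub_cos_pos h1.1 h h2.2.le
      have ht := hT h1 h2 h.le
      rw [abs_of_pos hc, abs_of_nonneg (sub_nonneg.2 ht),
        ENNReal.ofReal_of_nonpos (sub_nonpos.2 ht), zero_mul, add_zero,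
        ENNReal.ofReal_mul (sub_nonneg.2 ht)]
    · have hc := cos_sub_cos_pos h2.1 h h1.2.le
      have ht := hT h2 h1 h.le
      rw [abs_sub_comm (cos _), abs_of_pos hc, abs_sub_comm (T _), abs_of_nonneg (sub_nonneg.2 ht),
        ENNReal.ofReal_of_nonpos (sub_nonpos.2 ht), zero_mul, zero_add,
        ENNReal.ofReal_mul (sub_nonneg.2 ht)]
  have h1 := half (fun t => 1 / t) (by fun_prop) (fun t => by simp) (fun t ht => by positivity)
  have h2 := half (fun t => t) (by fun_prop) (fun t => rfl) (fun t ht => ht)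
  simp only [mul_one_div] at h1
  rw [h1, increment_identity hTm hT, ← h2, ← lintegral_const_mul' _ _ (by simp)]
  refine lintegral_congr fun p => ?_
  rw [ENNReal.ofReal_mul (by norm_num : (0 : ℝ) ≤ 2)]
  simp

/-- `∬ (s - t)²` for the semicircle law, computed in the angular variable. -/
lemma second_moment : ∫⁻ p, ENNReal.ofReal ((cos p.1 - cos p.2) ^ 2) ∂tau.prod tau =
    ENNReal.ofReal (1 / 2) := by
  have hpi := pi_pos
  have hQ : ∀ x, HasDerivAt (fun x => x / 8 - sin x * cos x * (1 - 2 * sin x ^ 2) / 8)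
      (sin x ^ 2 * cos x ^ 2) x := by
    intro x
    have hs := hasDerivAt_sin x
    have hc := hasDerivAt_cos x
    refine (((hasDerivAt_id x).div_const 8).sub (((hs.mul hc).mul
      (((hs.pow 2).const_mul 2).const_sub 1)).div_const 8)).congr_deriv ?_
    have h : cos x ^ 2 = 1 - sin x ^ 2 := by rw [cos_sq']
    simp only [Pi.mul_apply, Pi.pow_apply]
    push_cast
    ring_nf
    have h4 : cos x ^ 4 = (1 - sin x ^ 2) ^ 2 := by rw [← h]; ring
    simp only [h]
    ring
  rw [lintegral_prod _ (by fun_prop)]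
  have hin : ∀ α, ∫⁻ β, ENNReal.ofReal ((cos α - cos β) ^ 2) ∂tau =
      ENNReal.ofReal (cos α ^ 2 + 1 / 4) := by
    intro α
    rw [lintegral_tau (by fun_prop)]
    simp_rw [← ENNReal.ofReal_mul' (sq_nonneg (cos α - cos _))]
    rw [lintegral_Ioo_of_deriv pi_pos.le (F := fun β => 2 / π * (cos α ^ 2 *
      ((β - sin β * cos β) / 2) - 2 * cos α * (sin β ^ 3 / 3)
      + (β / 8 - sin β * cos β * (1 - 2 * sin β ^ 2) / 8))) (by fun_prop) (fun β _ => ?_)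
      (fun β _ => by positivity)]
    · congr 1
      simp only [sin_pi, sin_zero]
      field_simp
      ring
    · refine (((((hasDerivAt_sin_sq_primitive β).const_mul (cos α ^ 2)).sub
        ((hasDerivAt_sin_sq_cos_primitive β).const_mul (2 * cos α))).add
        (hQ β)).const_mul (2 / π)).congr_deriv ?_
      ring
  simp_rw [hin]
  rw [lintegral_tau (by fun_prop)]
  simp_rw [← ENNReal.ofReal_mul' (by positivity : 0 ≤ cos _ ^ 2 + (1 : ℝ) / 4)]
  rw [lintegral_Ioo_of_deriv pi_pos.le (F := fun β => 2 / π * (1 / 4 *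
      ((β - sin β * cos β) / 2)
      + (β / 8 - sin β * cos β * (1 - 2 * sin β ^ 2) / 8))) (by fun_prop) (fun β _ => ?_)
      (fun β _ => by positivity)]
  · congr 1
    simp only [sin_pi, sin_zero]
    field_simp
    ring
  · refine ((((hasDerivAt_sin_sq_primitive β).const_mul (1 / 4)).add
        (hQ β)).const_mul (2 / π)).congr_deriv ?_
    ring

lemma sg_le : sg ≤ volume.restrict (Icc (-1) 1) := by
  rw [sg_eq]
  refine Measure.le_iff.2 fun s hs => ?_
  rw [withDensity_apply _ hs, Measure.restrict_apply hs, ← lintegral_indicator hs,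
    ← lintegral_indicator_one (hs.inter measurableSet_Icc)]
  refine lintegral_mono fun t => ?_
  by_cases hs' : t ∈ s
  · rw [indicator_of_mem hs']
    by_cases ht : t ∈ Icc (-1 : ℝ) 1
    · rw [indicator_of_mem (show t ∈ s ∩ Icc (-1) 1 from ⟨hs', ht⟩), Pi.one_apply, ENNReal.ofReal_le_one]
      have h1 : 2 / π ≤ 1 := by
        rw [div_le_one pi_pos]
        exact two_le_pi
      have h2 : (max (1 - t ^ 2) 0) ^ ((1 : ℝ) / 2) ≤ 1 := by
        refine rpow_le_one (le_max_right _ _) (max_le (by nlinarith) zero_le_one) (by norm_num)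
      have h3 : 0 ≤ (max (1 - t ^ 2) 0) ^ ((1 : ℝ) / 2) := by positivity
      nlinarith
    · have h1 : 1 - t ^ 2 ≤ 0 := by
        by_contra! h
        exact ht ⟨by nlinarith, by nlinarith⟩
      rw [max_eq_right h1]
      simp
  · rw [indicator_of_notMem hs']
    exact zero_le

lemma lintegral_w1_lt_top (a b : ℝ) : ∫⁻ t in Icc a b, w1 t < ⊤ := by
  have h : ∫⁻ t in Icc a b, w1 t = ∫⁻ t in Icc a b, ENNReal.ofReal (-log t + t ^ 2) := by
    refine lintegral_congr_ae (ae_restrict_of_ae ?_)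
    filter_upwards [Measure.ae_ne volume (0 : ℝ)] with t ht
    exact w1_of_ne ht
  rw [h]
  refine Integrable.lintegral_lt_top ?_
  rcases le_total a b with hab | hab
  · rw [← IntegrableOn, ← intervalIntegrable_iff_integrableOn_Icc_of_le hab]
    exact (intervalIntegral.intervalIntegrable_log').neg.add
      (Continuous.intervalIntegrable (by fun_prop) _ _)
  · rw [← IntegrableOn, integrableOn_Icc_iff_integrableOn_Ioc, Ioc_eq_empty_of_le hab]
    exact integrableOn_empty

lemma E1_sg_lt_top : E1 sg < ⊤ := by
  have hin : ∀ x ∈ Icc (-1 : ℝ) 1, ∫⁻ y, w1 (x - y) ∂sg ≤ ∫⁻ t in Icc (-2) 2, w1 t := by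
    intro x hx
    refine (lintegral_mono' sg_le le_rfl).trans ?_
    rw [← lintegral_indicator measurableSet_Icc, ← lintegral_indicator measurableSet_Icc,
      ← lintegral_sub_left_eq_self ((Icc (-2) 2).indicator w1) x]
    refine lintegral_mono fun y => ?_
    by_cases hy : y ∈ Icc (-1 : ℝ) 1
    · rw [indicator_of_mem hy, indicator_of_mem]
      exact ⟨by linarith [hx.1, hy.2], by linarith [hx.2, hy.1]⟩
    · rw [indicator_of_notMem hy]
      exact zero_le
  have hae : ∀ᵐ x ∂sg, x ∈ Icc (-1 : ℝ) 1 :=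
    (Measure.absolutelyContinuous_of_le sg_le).ae_le (ae_restrict_mem measurableSet_Icc)
  calc E1 sg ≤ ∫⁻ _, (∫⁻ t in Icc (-2) 2, w1 t) ∂sg := by
        refine lintegral_mono_ae ?_
        filter_upwards [hae] with x hx
        exact hin x hx
    _ < ⊤ := by
        simpa using lintegral_w1_lt_top (-2) 2

/-- The semicircle law is the unique minimizer, up to translation, of the one-dimensional
logarithmic energy. -/
theorem semicircle_minimizer (m : Measure ℝ) [IsProbabilityMeasure m] :
    E1 sg ≤ E1 m ∧ (E1 m ≤ E1 sg → ∃ v, m = Measure.map (fun t => t + v) sg) := by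
  rcases eq_or_ne (E1 m) ⊤ with htop | htop
  · rw [htop]
    exact ⟨le_top, fun h => absurd E1_sg_lt_top (not_lt.2 h)⟩
  obtain ⟨T, hTm, hT, rfl⟩ := exists_monotone_transport m
  set P := tau.prod tau
  set D : ℝ × ℝ → ℝ := fun p => |T p.2 - T p.1| with hD
  set d : ℝ × ℝ → ℝ := fun p => |cos p.1 - cos p.2| with hd
  have hDm : Measurable D := by fun_prop
  have hdm : Measurable d := by fun_prop
  have eT : E1 (Measure.map T tau) = ∫⁻ p, w1 (D p) ∂P := by
    simp_rw [hD, w1_abs]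
    exact E1_map hTm
  have eS : E1 sg = ∫⁻ p, w1 (d p) ∂P := by
    simp_rw [hd, w1_abs]
    rw [sg, E1_map (by fun_prop)]
    refine lintegral_congr fun p => ?_
    congr 1
    ring
  have ed : ∫⁻ p, ENNReal.ofReal (d p ^ 2) ∂P = ENNReal.ofReal (1 / 2) := by
    simp_rw [hd, sq_abs]
    exact second_moment
  have eF : ∫⁻ p, ENNReal.ofReal (D p / d p) ∂P = ∫⁻ p, ENNReal.ofReal (2 * (D p * d p)) ∂P :=
    displacement_identity hTm hT
  set A := ∫⁻ p, ENNReal.ofReal (D p ^ 2) ∂P with hA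
  set F := ∫⁻ p, ENNReal.ofReal (2 * (D p * d p)) ∂P with hF
  have hAfin : A ≠ ⊤ := by
    have h : ∫⁻ p, ENNReal.ofReal (D p ^ 2 / 2) ∂P ≤ ∫⁻ p, w1 (D p) ∂P :=
      lintegral_mono fun p => half_sq_le_w1 _
    have h2 : A = 2 * ∫⁻ p, ENNReal.ofReal (D p ^ 2 / 2) ∂P := by
      rw [← lintegral_const_mul' _ _ (by simp)]
      refine lintegral_congr fun p => ?_
      rw [← ENNReal.ofReal_ofNat, ← ENNReal.ofReal_mul (by norm_num)]
      congr 1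
      ring
    rw [h2]
    exact ENNReal.mul_ne_top (by simp) (ne_top_of_le_ne_top (eT ▸ htop) h)
  have hFle : F ≤ A + ENNReal.ofReal (1 / 2) := by
    rw [← ed, hA, ← lintegral_add_left (by fun_prop)]
    refine lintegral_mono fun p => ?_
    rw [← ENNReal.ofReal_add (by positivity) (by positivity)]
    apply ENNReal.ofReal_le_ofReal
    linarith [two_mul_le_add_sq (D p) (d p), mul_assoc 2 (D p) (d p)]
  have hmain : E1 sg + 1 + A ≤ E1 (Measure.map T tau) + F + ENNReal.ofReal (1 / 2) := by
    have h1 : ∫⁻ p, (w1 (d p) + 1 + ENNReal.ofReal (D p ^ 2)) ∂P ≤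
        ∫⁻ p, (w1 (D p) + ENNReal.ofReal (D p / d p) + ENNReal.ofReal (d p ^ 2)) ∂P := by
      refine lintegral_mono_ae ?_
      filter_upwards [ae_prod_tau] with p ⟨h1, h2, h3⟩
      exact w1_tangent (abs_pos.2 (cos_sub_ne h1 h2 h3)) (abs_nonneg _)
    rw [lintegral_add_right _ (by fun_prop), lintegral_add_right _ measurable_const,
      lintegral_add_right _ (by fun_prop), lintegral_add_right _ (by fun_prop),
      ← eT, ← eS, eF, ed] at h1
    simpa using h1
  have h1half : (1 : ℝ≥0∞) = ENNReal.ofReal (1 / 2) + ENNReal.ofReal (1 / 2) := by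
    rw [← ENNReal.ofReal_add (by norm_num) (by norm_num)]
    norm_num
  constructor
  · have h := hmain.trans (add_le_add_left (add_le_add_right hFle _) _)
    rw [h1half] at h
    have h' : E1 sg + (A + (ENNReal.ofReal (1 / 2) + ENNReal.ofReal (1 / 2))) ≤
        E1 (Measure.map T tau) + (A + (ENNReal.ofReal (1 / 2) + ENNReal.ofReal (1 / 2))) := by
      refine (le_of_eq ?_).trans (h.trans (le_of_eq ?_)) <;> ring
    exact (ENNReal.add_le_add_iff_right (by simp [hAfin])).1 h'
  · intro hle
    have hfin : E1 sg ≠ ⊤ := E1_sg_lt_top.ne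
    have hFge : A + ENNReal.ofReal (1 / 2) ≤ F := by
      have h := hmain.trans (add_le_add_left (add_le_add_left hle _) _)
      rw [h1half] at h
      have h' : (A + ENNReal.ofReal (1 / 2)) + (E1 sg + ENNReal.ofReal (1 / 2)) ≤
          F + (E1 sg + ENNReal.ofReal (1 / 2)) := by
        refine (le_of_eq ?_).trans (h.trans (le_of_eq ?_)) <;> ring
      exact (ENNReal.add_le_add_iff_right (by simp [hfin])).1 h'
    -- equality in `2 D d ≤ D² + d²` forces `D = d`
    have hae : ∀ᵐ p ∂P, D p = d p := by
      have heq : (fun p => ENNReal.ofReal (2 * (D p * d p))) =ᵐ[P]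
          fun p => ENNReal.ofReal (D p ^ 2) + ENNReal.ofReal (d p ^ 2) := by
        refine ae_eq_of_ae_le_of_lintegral_le (ae_of_all _ fun p => ?_)
          (ne_top_of_le_ne_top (by simp [hAfin]) hFle) (by fun_prop) ?_
        · simp only
          rw [← ENNReal.ofReal_add (by positivity) (by positivity)]
          apply ENNReal.ofReal_le_ofReal
          linarith [two_mul_le_add_sq (D p) (d p), mul_assoc 2 (D p) (d p)]
        · rw [lintegral_add_left (by fun_prop), ed]
          exact hFge
      filter_upwards [heq] with p hp
      have h1 : 0 ≤ D p := abs_nonneg _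
      have h2 : 0 ≤ d p := abs_nonneg _
      rw [← ENNReal.ofReal_add (by positivity) (by positivity),
        ENNReal.ofReal_eq_ofReal_iff (by positivity) (by positivity)] at hp
      have : (D p - d p) ^ 2 = 0 := by linarith [hp, sub_sq (D p) (d p), mul_assoc 2 (D p) (d p)]
      exact sub_eq_zero.1 (pow_eq_zero_iff two_ne_zero |>.1 this)
    have hae2 : ∀ᵐ p ∂P, T p.2 - T p.1 = cos p.1 - cos p.2 := by
      filter_upwards [hae, ae_prod_tau] with p hp ⟨h1, h2, h3⟩
      simp only [hD, hd] at hp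
      rcases lt_or_gt_of_ne h3 with h | h
      · rwa [abs_of_nonneg (sub_nonneg.2 (hT h1 h2 h.le)),
          abs_of_pos (cos_sub_cos_pos h1.1 h h2.2.le)] at hp
      · rw [abs_sub_comm, abs_of_nonneg (sub_nonneg.2 (hT h2 h1 h.le)),
          abs_sub_comm, abs_of_pos (cos_sub_cos_pos h2.1 h h1.2.le)] at hp
        linarith
    obtain ⟨α, hα⟩ := (Measure.ae_ae_of_ae_prod hae2).exists
    refine ⟨T α + cos α, ?_⟩
    rw [sg, Measure.map_map (by fun_prop) (by fun_prop)]
    refine Measure.map_congr ?_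
    filter_upwards [hα] with β hβ
    simp only [Function.comp]
    linarith

/-! ### Planar lower bound by averaging projections -/

/-- The squared cosine `cos² θ(x)` of the angle of a vector, with value `0` at the origin. -/
def qf (x : ℝ × ℝ) : ℝ := x.1 ^ 2 / (x.1 ^ 2 + x.2 ^ 2)

lemma measurable_qf : Measurable qf := by unfold qf; fun_prop

lemma qf_nonneg (x : ℝ × ℝ) : 0 ≤ qf x := by unfold qf; positivity

lemma nrm_sq (x : ℝ × ℝ) : nrm x ^ 2 = x.1 ^ 2 + x.2 ^ 2 := sq_sqrt (by positivity)

lemma sq_add_sq_pos {x : ℝ × ℝ} (hx : x ≠ 0) : 0 < x.1 ^ 2 + x.2 ^ 2 := by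
  by_contra! h
  apply hx
  ext
  · simpa using (by nlinarith [sq_nonneg x.1, sq_nonneg x.2] : x.1 ^ 2 = 0)
  · simpa using (by nlinarith [sq_nonneg x.1, sq_nonneg x.2] : x.2 ^ 2 = 0)

lemma nrm_pos {x : ℝ × ℝ} (hx : x ≠ 0) : 0 < nrm x := sqrt_pos.2 (sq_add_sq_pos hx)

lemma log_average_bound_nonneg {t : ℝ} (ht : 0 ≤ t) :
    1 - ((t + 1) * log (t + 1) - (t - 1) * log (t - 1)) / 2 ≤
      -(log (1 + t ^ 2) / 2) + 6 / (1 + t ^ 2) := by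
  rcases le_or_gt 2 (t ^ 2) with h | h
  · have h1 : 1 < t := by nlinarith
    have hm : 0 < t - 1 := by linarith
    have hq : 0 < t ^ 2 - 1 := by linarith
    have e1 : 2 ≤ t * (log (t + 1) - log (t - 1)) := by
      have := le_log_one_add_of_nonneg (x := 2 / (t - 1)) (by positivity)
      have e2 : 1 + 2 / (t - 1) = (t + 1) / (t - 1) := by field_simp; ring
      have e3 : 2 * (2 / (t - 1)) / (2 / (t - 1) + 2) = 2 / t := by
        field_simp
        ring
      rw [e2, e3, log_div (by linarith) hm.ne', div_le_iff₀ (by linarith)] at this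
      linarith
    have e2 : log (t + 1) + log (t - 1) = log (t ^ 2 - 1) := by
      rw [← log_mul (by linarith) hm.ne']
      ring_nf
    have e3 : log (1 + t ^ 2) - log (t ^ 2 - 1) ≤ 2 / (t ^ 2 - 1) := by
      rw [← log_div (by positivity) hq.ne']
      refine (log_le_sub_one_of_pos (by positivity)).trans (le_of_eq ?_)
      field_simp
      ring
    have e4 : 2 / (t ^ 2 - 1) ≤ 12 / (1 + t ^ 2) := by
      rw [div_le_div_iff₀ hq (by positivity)]
      nlinarith
    have e5 : 12 / (1 + t ^ 2) = 2 * (6 / (1 + t ^ 2)) := by ring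
    nlinarith
  · have e1 : t ≤ (t + 1) * log (t + 1) := by
      have := one_sub_inv_le_log_of_pos (by linarith : 0 < t + 1)
      have h2 : (t + 1) * (1 - (t + 1)⁻¹) = t := by field_simp; ring
      calc t = (t + 1) * (1 - (t + 1)⁻¹) := h2.symm
        _ ≤ _ := by gcongr
    have e2 : (t - 1) * log (t - 1) ≤ t := by
      rcases lt_or_ge t 1 with h1 | h1
      · have := one_sub_inv_le_log_of_pos (by linarith : 0 < 1 - t)
        have h2 : (1 - t) * (1 - (1 - t)⁻¹) = -t := by
          have : 1 - t ≠ 0 := by linarith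
          field_simp
          ring
        have h3 : -t ≤ (1 - t) * log (1 - t) := by
          rw [← h2]
          exact mul_le_mul_of_nonneg_left this (by linarith)
        rw [← log_neg_eq_log, neg_sub]
        linarith
      · have : log (t - 1) ≤ 0 := log_nonpos (by linarith) (by nlinarith)
        nlinarith
    have e3 : log (1 + t ^ 2) ≤ t ^ 2 := by
      linarith [log_le_sub_one_of_pos (by positivity : 0 < 1 + t ^ 2)]
    have e4 : 2 ≤ 6 / (1 + t ^ 2) := by
      rw [le_div_iff₀ (by positivity)]
      linarith
    linarith

/-- With `t = x₂ / x₁`, the left side is the average of `-ln |t + c|` over `c ∈ [-1, 1]`, and the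
last term on the right is `6 cos² θ`. -/
lemma log_average_bound (t : ℝ) :
    1 - ((t + 1) * log (t + 1) - (t - 1) * log (t - 1)) / 2 ≤
      -(log (1 + t ^ 2) / 2) + 6 / (1 + t ^ 2) := by
  rcases le_total 0 t with ht | ht
  · exact log_average_bound_nonneg ht
  · have h := log_average_bound_nonneg (t := -t) (by linarith)
    rw [← log_neg_eq_log (-t + 1), ← log_neg_eq_log (-t - 1)] at h
    simp only [neg_sq] at h
    have e1 : -(-t + 1) = t - 1 := by ring
    have e2 : -(-t - 1) = t + 1 := by ring
    rw [e1, e2] at h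
    linarith

/-- The planar logarithmic kernel, with an extra `6 cos² θ`, dominates the average of
one-dimensional kernels seen through the projections `x ↦ x₂ + c x₁`, `|c| ≤ 1`. -/
lemma kernel_bound {x : ℝ × ℝ} (hx : x ≠ 0) :
    (1 / 2 : ℝ≥0∞) * ∫⁻ c in Icc (-1 : ℝ) 1, w1 (x.2 + c * x.1) ≤
      ENNReal.ofReal (-log (nrm x) + 6 * qf x + nrm x ^ 2) := by
  have hpos := sq_add_sq_pos hx
  by_cases h1 : x.1 = 0
  · have h2 : x.2 ≠ 0 := fun h => hx (Prod.ext h1 h)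
    have hn : nrm x = |x.2| := by simp [nrm, h1, sqrt_sq_eq_abs]
    have h3 : (1 / 2 : ℝ≥0∞) * (w1 x.2 * 2) = w1 x.2 := by
      rw [mul_comm, mul_assoc, one_div, ENNReal.mul_inv_cancel (by simp) (by simp), mul_one]
    simp only [h1, mul_zero, add_zero, lintegral_const, Measure.restrict_apply_univ,
      Real.volume_Icc]
    norm_num
    rw [← one_div, h3, w1_of_ne h2, hn]
    simp [qf, h1]
  · set t := x.2 / x.1 with ht
    have e : ∀ c, x.2 + c * x.1 = x.1 * (t + c) := fun c => by rw [ht]; field_simp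
    have hint1 : IntervalIntegrable (fun c => log (t + c)) volume (-1) 1 := by
      have := (intervalIntegral.intervalIntegrable_log' (a := t - 1) (b := t + 1)).comp_add_left t
      simpa using this
    have hint : IntervalIntegrable (fun c => -(log x.1 + log (t + c)) + (x.2 + c * x.1) ^ 2)
        volume (-1) 1 :=
      ((intervalIntegrable_const).add hint1).neg.add
        (Continuous.intervalIntegrable (by fun_prop) _ _)
    have hae : ∀ᵐ c ∂(volume.restrict (Icc (-1 : ℝ) 1)), c ≠ -t :=
      ae_restrict_of_ae (Measure.ae_ne volume _)
    have hlog : ∀ c, c ≠ -t → -(log x.1 + log (t + c)) + (x.2 + c * x.1) ^ 2 =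
        -log (x.2 + c * x.1) + (x.2 + c * x.1) ^ 2 ∧ x.2 + c * x.1 ≠ 0 := by
      intro c hc
      have hc' : t + c ≠ 0 := fun h => hc (by linarith)
      rw [e, log_mul h1 hc']
      exact ⟨rfl, mul_ne_zero h1 hc'⟩
    have hl : ∫⁻ c in Icc (-1 : ℝ) 1, w1 (x.2 + c * x.1) =
        ∫⁻ c in Icc (-1 : ℝ) 1,
          ENNReal.ofReal (-(log x.1 + log (t + c)) + (x.2 + c * x.1) ^ 2) := by
      refine lintegral_congr_ae ?_
      filter_upwards [hae] with c hc
      rw [(hlog c hc).1, w1_of_ne (hlog c hc).2]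
    have hI : IntegrableOn (fun c => -(log x.1 + log (t + c)) + (x.2 + c * x.1) ^ 2)
        (Icc (-1) 1) :=
      (intervalIntegrable_iff_integrableOn_Icc_of_le (by norm_num)).1 hint
    rw [hl, ← ofReal_integral_eq_lintegral_ofReal hI ?_, integral_Icc_eq_integral_Ioc,
      ← intervalIntegral.integral_of_le (by norm_num)]
    · have h2 : (1 / 2 : ℝ≥0∞) = ENNReal.ofReal (1 / 2) := by
        rw [ENNReal.ofReal_div_of_pos (by norm_num)]
        simp
      rw [h2, ← ENNReal.ofReal_mul (by norm_num)]
      apply ENNReal.ofReal_le_ofReal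
      have i1 : ∫ c in (-1 : ℝ)..1, log (t + c) =
          (t + 1) * log (t + 1) - (t - 1) * log (t - 1) - 2 := by
        rw [intervalIntegral.integral_comp_add_left (fun u => log u) t, integral_log]
        rw [← sub_eq_add_neg]
        ring
      have i2 : ∫ c in (-1 : ℝ)..1, (x.2 + c * x.1) ^ 2 = 2 * x.2 ^ 2 + 2 / 3 * x.1 ^ 2 := by
        have hd : ∀ c ∈ uIcc (-1 : ℝ) 1, HasDerivAt (fun c => x.2 ^ 2 * c + x.2 * x.1 * c ^ 2
            + x.1 ^ 2 * c ^ 3 / 3) ((x.2 + c * x.1) ^ 2) c := by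
          intro c _
          have hid := hasDerivAt_id c
          refine (((hid.const_mul (x.2 ^ 2)).add ((hid.pow 2).const_mul (x.2 * x.1))).add
            (((hid.pow 3).const_mul (x.1 ^ 2)).div_const 3)).congr_deriv ?_
          simp only [id]
          push_cast
          ring
        rw [intervalIntegral.integral_eq_sub_of_hasDerivAt hd
          (Continuous.intervalIntegrable (by fun_prop) _ _)]
        ring
      have hneg : IntervalIntegrable (fun c => -(log x.1 + log (t + c))) volume (-1) 1 :=
        ((intervalIntegrable_const).add hint1).neg
      have hsq : IntervalIntegrable (fun c => (x.2 + c * x.1) ^ 2) volume (-1) 1 :=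
        Continuous.intervalIntegrable (by fun_prop) _ _
      rw [intervalIntegral.integral_add hneg hsq, intervalIntegral.integral_neg,
        intervalIntegral.integral_add intervalIntegrable_const hint1, i1, i2,
        intervalIntegral.integral_const, nrm_sq]
      have hb := log_average_bound t
      have hx1 : 0 < x.1 ^ 2 := by positivity
      have e1 : 1 + t ^ 2 = (x.1 ^ 2 + x.2 ^ 2) / x.1 ^ 2 := by
        rw [ht]; field_simp
      have e2 : 6 / (1 + t ^ 2) = 6 * qf x := by
        rw [e1, qf]; field_simp
      have e3 : log (nrm x) = log (x.1 ^ 2 + x.2 ^ 2) / 2 := by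
        rw [nrm, log_sqrt hpos.le]
      have e4 : log (1 + t ^ 2) = log (x.1 ^ 2 + x.2 ^ 2) - 2 * log x.1 := by
        rw [e1, log_div hpos.ne' hx1.ne', log_pow]
        push_cast
        ring
      rw [e2, e4] at hb
      rw [e3, smul_eq_mul]
      linarith
    · filter_upwards [hae] with c hc
      rw [(hlog c hc).1]
      exact w1_nonneg (hlog c hc).2

lemma E1_map_prod {p : ℝ × ℝ → ℝ} (hp : Measurable p) (μ : Measure (ℝ × ℝ)) [SFinite μ] :
    E1 (Measure.map p μ) = ∫⁻ x, ∫⁻ y, w1 (p x - p y) ∂μ ∂μ := by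
  have h3 : Measurable fun p : ℝ × ℝ => w1 (p.1 - p.2) := measurable_w1.comp (by fun_prop)
  rw [E1, lintegral_map h3.lintegral_prod_right' hp]
  refine lintegral_congr fun x => ?_
  have h4 : Measurable fun y => w1 (p x - y) := measurable_w1.comp (by fun_prop)
  exact lintegral_map h4 hp

/-- The lower bound of a planar energy by the one-dimensional energies of the projections. -/
lemma energy_lower {Ω : ℝ → ℝ} {b : ℝ} (hb : 0 ≤ b)
    (hΩ : ∀ x : ℝ × ℝ, x ≠ 0 → b + 7 * qf x ≤ Ω (ang x))
    (μ : Measure (ℝ × ℝ)) [IsProbabilityMeasure μ] :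
    E1 sg + (∫⁻ x, ∫⁻ y, ENNReal.ofReal (qf (x - y)) ∂μ ∂μ) + ENNReal.ofReal b ≤
      ∫⁻ x, ∫⁻ y, WlogKernel Ω (x - y) ∂μ ∂μ := by
  set K : ℝ × ℝ → ℝ≥0∞ := fun x => (1 / 2 : ℝ≥0∞) * ∫⁻ c in Icc (-1 : ℝ) 1, w1 (x.2 + c * x.1)
    with hK
  have hpt : ∀ x, K x + ENNReal.ofReal (qf x) + ENNReal.ofReal b ≤ WlogKernel Ω x := by
    intro x
    by_cases hx : x = 0
    · simp [WlogKernel, hx]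
    · have h0 : 0 ≤ -log (nrm x) + 6 * qf x + nrm x ^ 2 := by
        linarith [w1_nonneg (nrm_pos hx).ne', qf_nonneg x]
      calc K x + ENNReal.ofReal (qf x) + ENNReal.ofReal b
          ≤ ENNReal.ofReal (-log (nrm x) + 6 * qf x + nrm x ^ 2) + ENNReal.ofReal (qf x)
            + ENNReal.ofReal b := by gcongr; exact kernel_bound hx
        _ = ENNReal.ofReal (-log (nrm x) + 6 * qf x + nrm x ^ 2 + qf x + b) := by
            rw [ENNReal.ofReal_add (by linarith [qf_nonneg x]) hb,
              ENNReal.ofReal_add h0 (qf_nonneg x)]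
        _ ≤ _ := by
            rw [WlogKernel, if_neg hx]
            apply ENNReal.ofReal_le_ofReal
            have := hΩ x hx
            rw [Wlog]
            linarith
  have hsub : Measurable fun p : (ℝ × ℝ) × (ℝ × ℝ) => p.1 - p.2 := by fun_prop
  have hqm : Measurable fun p : (ℝ × ℝ) × (ℝ × ℝ) => ENNReal.ofReal (qf (p.1 - p.2)) :=
    (measurable_qf.comp hsub).ennreal_ofReal
  have hw : Measurable fun p : (ℝ × ℝ) × ℝ => w1 (p.1.2 + p.2 * p.1.1) :=
    measurable_w1.comp (by fun_prop)
  have hKm : Measurable K := (hw.lintegral_prod_right').const_mul _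
  have hsplit : ∫⁻ x, ∫⁻ y, (K (x - y) + ENNReal.ofReal (qf (x - y)) + ENNReal.ofReal b) ∂μ ∂μ =
      (∫⁻ x, ∫⁻ y, K (x - y) ∂μ ∂μ) + (∫⁻ x, ∫⁻ y, ENNReal.ofReal (qf (x - y)) ∂μ ∂μ)
        + ENNReal.ofReal b := by
    have : ∀ x, ∫⁻ y, (K (x - y) + ENNReal.ofReal (qf (x - y)) + ENNReal.ofReal b) ∂μ =
        (∫⁻ y, K (x - y) ∂μ) + (∫⁻ y, ENNReal.ofReal (qf (x - y)) ∂μ) + ENNReal.ofReal b := by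
      intro x
      have hqx : Measurable fun y => ENNReal.ofReal (qf (x - y)) :=
        (measurable_qf.comp (measurable_const.sub measurable_id)).ennreal_ofReal
      rw [lintegral_add_right _ measurable_const, lintegral_add_right _ hqx]
      simp
    have hqi : Measurable fun x => ∫⁻ y, ENNReal.ofReal (qf (x - y)) ∂μ :=
      hqm.lintegral_prod_right'
    simp_rw [this]
    rw [lintegral_add_right _ measurable_const, lintegral_add_right _ hqi]
    simp
  have hKE : E1 sg ≤ ∫⁻ x, ∫⁻ y, K (x - y) ∂μ ∂μ := by
    have hw3 : Measurable fun q : ((ℝ × ℝ) × (ℝ × ℝ)) × ℝ =>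
        w1 ((q.1.1 - q.1.2).2 + q.2 * (q.1.1 - q.1.2).1) := measurable_w1.comp (by fun_prop)
    have e1 : ∫⁻ x, ∫⁻ y, K (x - y) ∂μ ∂μ = (1 / 2 : ℝ≥0∞) *
        ∫⁻ c in Icc (-1 : ℝ) 1, ∫⁻ x, ∫⁻ y, w1 ((x - y).2 + c * (x - y).1) ∂μ ∂μ := by
      simp only [hK]
      rw [lintegral_lintegral_swap (f := fun c x => ∫⁻ y, w1 ((x - y).2 + c * (x - y).1) ∂μ)
        (Measurable.aemeasurable ((hw3.comp (by fun_prop : Measurable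
          fun r : (ℝ × (ℝ × ℝ)) × (ℝ × ℝ) => ((r.1.2, r.2), r.1.1))).lintegral_prod_right')),
        ← lintegral_const_mul' _ _ (by simp)]
      refine lintegral_congr fun x => ?_
      rw [lintegral_lintegral_swap (f := fun c y => w1 ((x - y).2 + c * (x - y).1))
        (Measurable.aemeasurable (hw3.comp (by fun_prop : Measurable
          fun r : ℝ × (ℝ × ℝ) => ((x, r.2), r.1)))), ← lintegral_const_mul' _ _ (by simp)]
    have e2 : ∀ c : ℝ, E1 sg ≤ ∫⁻ x, ∫⁻ y, w1 ((x - y).2 + c * (x - y).1) ∂μ ∂μ := by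
      intro c
      have hp : Measurable fun x : ℝ × ℝ => x.2 + c * x.1 := by fun_prop
      have : IsProbabilityMeasure (Measure.map (fun x : ℝ × ℝ => x.2 + c * x.1) μ) :=
        Measure.isProbabilityMeasure_map hp.aemeasurable
      refine (semicircle_minimizer _).1.trans (le_of_eq ((E1_map_prod hp μ).trans ?_))
      refine lintegral_congr fun x => lintegral_congr fun y => ?_
      congr 1
      simp only [Prod.fst_sub, Prod.snd_sub]
      ring
    rw [e1]
    calc E1 sg = (1 / 2 : ℝ≥0∞) * ∫⁻ _ in Icc (-1 : ℝ) 1, E1 sg := by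
          rw [lintegral_const, Measure.restrict_apply_univ, Real.volume_Icc]
          norm_num
          rw [mul_left_comm, ENNReal.inv_mul_cancel (by simp) (by simp), mul_one]
      _ ≤ _ := by
          gcongr with c
          exact e2 c
  calc _ ≤ (∫⁻ x, ∫⁻ y, K (x - y) ∂μ ∂μ) + (∫⁻ x, ∫⁻ y, ENNReal.ofReal (qf (x - y)) ∂μ ∂μ)
        + ENNReal.ofReal b := by gcongr
    _ = _ := hsplit.symm
    _ ≤ _ := lintegral_mono fun x => lintegral_mono fun y => hpt _

lemma cos_ang {x : ℝ × ℝ} (hx : x ≠ 0) : cos (ang x) ^ 2 = qf x := by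
  have hz : (⟨x.1, x.2⟩ : ℂ) ≠ 0 := by
    intro h
    exact hx (Prod.ext (congrArg Complex.re h) (congrArg Complex.im h))
  have h1 : cos (ang x) = cos (Complex.arg ⟨x.1, x.2⟩) := by
    unfold ang
    split_ifs with h
    · rw [h, cos_neg]
    · rfl
  rw [h1, Complex.cos_arg hz, div_pow, Complex.sq_norm, Complex.normSq_mk, qf]
  simp only [sq]

lemma ang_mem (x : ℝ × ℝ) : ang x ∈ Icc (-π) π := by
  have h := Complex.arg_mem_Ioc ⟨x.1, x.2⟩
  unfold ang
  split_ifs with h'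
  · exact ⟨le_rfl, by linarith [pi_pos]⟩
  · exact ⟨h.1.le, h.2⟩

lemma measurable_ang : Measurable ang := by
  have h : Measurable fun x : ℝ × ℝ => (⟨x.1, x.2⟩ : ℂ) :=
    Complex.measurableEquivRealProd.symm.measurable
  have h2 := Complex.measurable_arg.comp h
  unfold ang
  exact Measurable.ite (h2 (measurableSet_singleton π)) measurable_const h2

lemma angle_bound {Ω : ℝ → ℝ} {C : ℝ} (hC : 0 ≤ C) (hper : ∀ θ, Ω (θ + π) = Ω θ)
    (h : ∀ θ ∈ Icc (0 : ℝ) π, Ω (π / 2) + C * |θ - π / 2| ^ 2 ≤ Ω θ) {x : ℝ × ℝ} (hx : x ≠ 0) :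
    Ω (π / 2) + C * qf x ≤ Ω (ang x) := by
  have key : ∀ θ ∈ Icc (0 : ℝ) π, Ω (π / 2) + C * cos θ ^ 2 ≤ Ω θ := by
    intro θ hθ
    refine le_trans ?_ (h θ hθ)
    have h1 : |cos θ| ≤ |θ - π / 2| := by
      rw [← sin_pi_div_two_sub, abs_sub_comm]
      exact abs_sin_le_abs
    have h2 : cos θ ^ 2 ≤ |θ - π / 2| ^ 2 := by
      rw [← sq_abs (cos θ)]
      gcongr
    gcongr
  rw [← cos_ang hx]
  have hm := ang_mem x
  rcases le_or_gt 0 (ang x) with h0 | h0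
  · exact key _ ⟨h0, hm.2⟩
  · have := key (ang x + π) ⟨by linarith [hm.1], by linarith⟩
    rwa [hper, cos_add_pi, neg_sq] at this

/-- The angle of a vertical vector is `±π/2`. -/
lemma ang_vertical {Ω : ℝ → ℝ} (hper : ∀ θ, Ω (θ + π) = Ω θ) {u : ℝ} (hu : u ≠ 0) :
    Ω (ang (0, u)) = Ω (π / 2) := by
  rcases lt_or_gt_of_ne hu with h | h
  · have h1 : Complex.arg ⟨0, u⟩ = -(π / 2) := by
      rw [Complex.arg_eq_neg_pi_div_two_iff]
      exact ⟨rfl, h⟩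
    have h2 : ang (0, u) = -(π / 2) := by
      unfold ang
      simp only [h1]
      rw [if_neg (by linarith [pi_pos])]
    rw [h2, ← hper]
    ring_nf
  · have h1 : Complex.arg ⟨0, u⟩ = π / 2 := by
      rw [Complex.arg_eq_pi_div_two_iff]
      exact ⟨rfl, h⟩
    have h2 : ang (0, u) = π / 2 := by
      unfold ang
      simp only [h1]
      rw [if_neg (by linarith [pi_pos])]
    rw [h2]

lemma kernel_vertical {Ω : ℝ → ℝ} (hper : ∀ θ, Ω (θ + π) = Ω θ) (hb : 0 ≤ Ω (π / 2)) (u : ℝ) :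
    WlogKernel Ω (0, u) = w1 u + ENNReal.ofReal (Ω (π / 2)) := by
  by_cases hu : u = 0
  · simp [hu, w1, WlogKernel]
  · have hn : nrm (0, u) = |u| := by simp [nrm, sqrt_sq_eq_abs]
    rw [w1_of_ne hu, ← ENNReal.ofReal_add (w1_nonneg hu) hb, WlogKernel,
      if_neg (fun h => hu (congrArg Prod.snd h)), Wlog, ang_vertical hper hu, hn, log_abs, sq_abs]
    congr 1
    ring

lemma energy_line {Ω : ℝ → ℝ} (hper : ∀ θ, Ω (θ + π) = Ω θ) (hb : 0 ≤ Ω (π / 2)) (v : ℝ)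
    (m : Measure ℝ) [IsProbabilityMeasure m] :
    ∫⁻ x, ∫⁻ y, WlogKernel Ω (x - y) ∂(Measure.map (fun t : ℝ => (v, t)) m)
      ∂(Measure.map (fun t : ℝ => (v, t)) m) = E1 m + ENNReal.ofReal (Ω (π / 2)) := by
  have he : MeasurableEmbedding fun t : ℝ => (v, t) := measurableEmbedding_prodMk_left v
  rw [he.lintegral_map]
  simp_rw [he.lintegral_map]
  have : ∀ a b : ℝ, WlogKernel Ω ((v, a) - (v, b)) = w1 (a - b) + ENNReal.ofReal (Ω (π / 2)) := by
    intro a b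
    rw [← kernel_vertical hper hb]
    simp
  simp_rw [this]
  have h2 : ∀ a, ∫⁻ b, (w1 (a - b) + ENNReal.ofReal (Ω (π / 2))) ∂m =
      (∫⁻ b, w1 (a - b) ∂m) + ENNReal.ofReal (Ω (π / 2)) := by
    intro a
    rw [lintegral_add_right _ measurable_const]
    simp
  simp_rw [h2]
  rw [lintegral_add_right _ measurable_const]
  simp [E1]

/-- Rigidity: the lower bound `energy_lower` is attained only by translates of the vertical
semicircle law. -/
lemma line_of_energy_le {Ω : ℝ → ℝ} (hper : ∀ θ, Ω (θ + π) = Ω θ) (hb : 0 ≤ Ω (π / 2))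
    (hΩ : ∀ x : ℝ × ℝ, x ≠ 0 → Ω (π / 2) + 7 * qf x ≤ Ω (ang x))
    (μ : Measure (ℝ × ℝ)) [IsProbabilityMeasure μ]
    (hle : ∫⁻ x, ∫⁻ y, WlogKernel Ω (x - y) ∂μ ∂μ ≤ E1 sg + ENNReal.ofReal (Ω (π / 2))) :
    ∃ v : ℝ × ℝ, μ = Measure.map (fun x => x + v) rho1Dlog := by
  have hlow := (energy_lower hb hΩ μ).trans hle
  have hsub : Measurable fun p : (ℝ × ℝ) × (ℝ × ℝ) => p.1 - p.2 := by fun_prop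
  have hqm : Measurable fun p : (ℝ × ℝ) × (ℝ × ℝ) => ENNReal.ofReal (qf (p.1 - p.2)) :=
    (measurable_qf.comp hsub).ennreal_ofReal
  have hfin : E1 sg + ENNReal.ofReal (Ω (π / 2)) ≠ ⊤ := by simp [E1_sg_lt_top.ne]
  have hq0 : ∫⁻ x, ∫⁻ y, ENNReal.ofReal (qf (x - y)) ∂μ ∂μ = 0 := by
    set Q := ∫⁻ x, ∫⁻ y, ENNReal.ofReal (qf (x - y)) ∂μ ∂μ
    have h : Q + (E1 sg + ENNReal.ofReal (Ω (π / 2))) ≤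
        0 + (E1 sg + ENNReal.ofReal (Ω (π / 2))) := by
      refine (le_of_eq ?_).trans (hlow.trans (le_of_eq ?_)) <;> ring
    exact le_antisymm ((ENNReal.add_le_add_iff_right hfin).1 h) zero_le
  have hqi : Measurable fun x => ∫⁻ y, ENNReal.ofReal (qf (x - y)) ∂μ :=
    hqm.lintegral_prod_right'
  rw [lintegral_eq_zero_iff hqi] at hq0
  obtain ⟨x, hx⟩ := hq0.exists
  have hx' : ∫⁻ y, ENNReal.ofReal (qf (x - y)) ∂μ = 0 := hx
  have hqx : Measurable fun y => ENNReal.ofReal (qf (x - y)) :=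
        (measurable_qf.comp (measurable_const.sub measurable_id)).ennreal_ofReal
  rw [lintegral_eq_zero_iff hqx] at hx'
  have hline : ∀ᵐ y ∂μ, y.1 = x.1 := by
    filter_upwards [hx'] with y hy
    have h1 : qf (x - y) ≤ 0 := ENNReal.ofReal_eq_zero.1 hy
    by_cases hne : x - y = 0
    · rw [sub_eq_zero.1 hne]
    · have h2 := sq_add_sq_pos hne
      rw [qf, div_le_iff₀ h2, zero_mul] at h1
      have h3 : (x - y).1 = 0 := by nlinarith [sq_nonneg (x - y).1]
      simp only [Prod.fst_sub] at h3
      linarith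
  set m := Measure.map Prod.snd μ with hm
  have : IsProbabilityMeasure m := Measure.isProbabilityMeasure_map measurable_snd.aemeasurable
  have hμ : μ = Measure.map (fun t : ℝ => (x.1, t)) m := by
    rw [hm, Measure.map_map (by fun_prop) measurable_snd]
    conv_lhs => rw [← Measure.map_id (μ := μ)]
    refine Measure.map_congr ?_
    filter_upwards [hline] with y hy
    exact Prod.ext hy rfl
  rw [hμ, energy_line hper hb] at hle
  obtain ⟨w, hw⟩ := (semicircle_minimizer m).2
    ((ENNReal.add_le_add_iff_right ENNReal.ofReal_ne_top).1 hle)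
  refine ⟨(x.1, w), ?_⟩
  rw [hμ, hw, rho1Dlog_eq, Measure.map_map (by fun_prop) (by fun_prop),
    Measure.map_map (by fun_prop) (by fun_prop)]
  congr 1
  funext t
  simp

instance : IsProbabilityMeasure rho1Dlog := by
  rw [rho1Dlog_eq]
  exact Measure.isProbabilityMeasure_map (by fun_prop)

lemma energyLog_rho {Ω : ℝ → ℝ} (hper : ∀ θ, Ω (θ + π) = Ω θ) (hb : 0 ≤ Ω (π / 2)) :
    energyLog Ω rho1Dlog = (1 / 2 : ℝ≥0∞) * (E1 sg + ENNReal.ofReal (Ω (π / 2))) := by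
  rw [energyLog, rho1Dlog_eq, energy_line hper hb]

lemma half_mul_le_iff {a b : ℝ≥0∞} : (1 / 2 : ℝ≥0∞) * a ≤ (1 / 2 : ℝ≥0∞) * b ↔ a ≤ b :=
  ENNReal.mul_le_mul_iff_right (by simp) (by simp)

/-- Strong coercivity of the angular profile at `π / 2` makes the vertical semicircle law the
unique minimizer. -/
lemma unique_minimizer_of_bound {Ω : ℝ → ℝ} (hper : ∀ θ, Ω (θ + π) = Ω θ) (hb : 0 ≤ Ω (π / 2))
    (hΩ : ∀ x : ℝ × ℝ, x ≠ 0 → Ω (π / 2) + 7 * qf x ≤ Ω (ang x)) :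
    IsUniqueMinimizer (energyLog Ω) rho1Dlog := by
  refine ⟨⟨inferInstance, fun μ hμ => ?_⟩, fun μ hμ => ?_⟩
  · rw [energyLog_rho hper hb, energyLog, half_mul_le_iff]
    exact le_trans (by gcongr; exact le_self_add) (energy_lower hb hΩ μ)
  · have := hμ.1
    have h := hμ.2 rho1Dlog inferInstance
    rw [energyLog_rho hper hb, energyLog, half_mul_le_iff] at h
    exact line_of_energy_le hper hb hΩ μ h

/-! ### Small angular profiles and monotonicity in the parameter -/

lemma measurable_kernel {Ω : ℝ → ℝ} (hm : Measurable Ω) : Measurable (WlogKernel Ω) := by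
  have hn : Measurable nrm := by unfold nrm; fun_prop
  have hW : Measurable (Wlog Ω) :=
    (hn.log.neg.add (hm.comp measurable_ang)).add (hn.pow_const 2)
  unfold WlogKernel
  exact Measurable.ite (measurableSet_singleton (0 : ℝ × ℝ)) measurable_const hW.ennreal_ofReal

lemma sg_Icc_ge {c d : ℝ} (hc : -(3 / 5) ≤ c) (hd : d ≤ 3 / 5) :
    ENNReal.ofReal ((d - c) / 2) ≤ sg (Icc c d) := by
  rw [sg_eq, withDensity_apply _ measurableSet_Icc]
  calc ENNReal.ofReal ((d - c) / 2) = ∫⁻ _ in Icc c d, ENNReal.ofReal (1 / 2) := by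
        rw [lintegral_const, Measure.restrict_apply_univ, Real.volume_Icc,
          ← ENNReal.ofReal_mul (by norm_num)]
        congr 1
        ring
    _ ≤ _ := by
        refine setLIntegral_mono' measurableSet_Icc fun t ht => ENNReal.ofReal_le_ofReal ?_
        have h1 : (4 / 5 : ℝ) ≤ (max (1 - t ^ 2) 0) ^ ((1 : ℝ) / 2) := by
          rw [← sqrt_eq_rpow]
          refine le_sqrt_of_sq_le (le_max_of_le_left ?_)
          nlinarith [ht.1, ht.2]
        have h2 : 1 / 2 ≤ 2 / π * (4 / 5) := by
          rw [div_mul_eq_mul_div, le_div_iff₀ pi_pos]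
          linarith [pi_lt_d2]
        exact h2.trans (by gcongr)

/-- The square of the semicircle law charges the strip `|a - b| ≤ 1 / 20`: its density is at least
`1 / 2` on `[-3/5, 3/5]`. -/
lemma strip_mass : ENNReal.ofReal (1 / 80) ≤
    ∫⁻ a, ∫⁻ b, (Icc (-(1 / 20) : ℝ) (1 / 20)).indicator 1 (a - b) ∂sg ∂sg := by
  have h1 : ∀ a ∈ Icc (-(1 / 2) : ℝ) (1 / 2), ENNReal.ofReal (1 / 40) ≤
      ∫⁻ b, (Icc (-(1 / 20) : ℝ) (1 / 20)).indicator 1 (a - b) ∂sg := by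
    intro a ha
    calc ENNReal.ofReal (1 / 40) = ENNReal.ofReal ((a + 1 / 20 - a) / 2) := by congr 1; ring
      _ ≤ sg (Icc a (a + 1 / 20)) := sg_Icc_ge (by linarith [ha.1]) (by linarith [ha.2])
      _ = ∫⁻ b, (Icc a (a + 1 / 20)).indicator 1 b ∂sg :=
          (lintegral_indicator_one measurableSet_Icc).symm
      _ ≤ _ := by
          refine lintegral_mono fun b => ?_
          by_cases hb : b ∈ Icc a (a + 1 / 20)
          · have hab : a - b ∈ Icc (-(1 / 20) : ℝ) (1 / 20) :=
              ⟨by linarith [hb.2], by linarith [hb.1]⟩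
            rw [indicator_of_mem hb, indicator_of_mem hab]
            rfl
          · rw [indicator_of_notMem hb]
            exact zero_le
  calc ENNReal.ofReal (1 / 80)
      = ENNReal.ofReal (1 / 40) * ENNReal.ofReal ((1 / 2 - -(1 / 2)) / 2) := by
        rw [← ENNReal.ofReal_mul (by norm_num)]
        norm_num
    _ ≤ ENNReal.ofReal (1 / 40) * sg (Icc (-(1 / 2) : ℝ) (1 / 2)) := by
        gcongr
        exact sg_Icc_ge (by norm_num) (by norm_num)
    _ = ∫⁻ _ in Icc (-(1 / 2) : ℝ) (1 / 2), ENNReal.ofReal (1 / 40) ∂sg := by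
        rw [lintegral_const, Measure.restrict_apply_univ]
    _ ≤ ∫⁻ a in Icc (-(1 / 2) : ℝ) (1 / 2),
        ∫⁻ b, (Icc (-(1 / 20) : ℝ) (1 / 20)).indicator 1 (a - b) ∂sg ∂sg :=
        setLIntegral_mono' measurableSet_Icc h1
    _ ≤ _ := setLIntegral_le_lintegral _ _

/-- Splitting horizontally by `1/20` lowers the kernel by at least `log 2 / 2` near the diagonal,
at a cost of `(1/20)²` plus the angular profile. -/
lemma kernel_shift_le {Ω : ℝ → ℝ} (hnn : ∀ θ, 0 ≤ Ω θ) (hle : ∀ θ, Ω θ ≤ 1 / 1000) {v : ℝ}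
    (hv : v ^ 2 = 1 / 400) (u : ℝ) :
    WlogKernel Ω (v, u) +
      ENNReal.ofReal (log 2 / 2) * (Icc (-(1 / 20) : ℝ) (1 / 20)).indicator 1 u ≤
      w1 u + ENNReal.ofReal (7 / 2000) := by
  have hv0 : v ≠ 0 := fun h => by norm_num [h] at hv
  have hx : ((v, u) : ℝ × ℝ) ≠ 0 := fun h => hv0 (congrArg Prod.fst h)
  by_cases hu : u = 0
  · simp [hu, w1]
  have hu2 : 0 < u ^ 2 := by positivity
  have hn2 : nrm (v, u) ^ 2 = 1 / 400 + u ^ 2 := by rw [nrm_sq, hv]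
  have hl : log (nrm (v, u)) = log (1 / 400 + u ^ 2) / 2 := by
    rw [← hn2, log_pow]
    push_cast
    ring
  have hlu : log (u ^ 2) = 2 * log u := by
    rw [log_pow]
    push_cast
    ring
  have hW : Wlog Ω (v, u) ≤ -(log (1 / 400 + u ^ 2) / 2) + u ^ 2 + 7 / 2000 := by
    rw [Wlog, hn2, hl]
    linarith [hle (ang (v, u))]
  have hW0 : 0 ≤ Wlog Ω (v, u) := by
    rw [Wlog]
    linarith [w1_nonneg (nrm_pos hx).ne', hnn (ang (v, u))]
  rw [WlogKernel, if_neg hx, w1_of_ne hu, ← ENNReal.ofReal_add (w1_nonneg hu) (by norm_num)]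
  by_cases hm : u ∈ Icc (-(1 / 20) : ℝ) (1 / 20)
  · rw [indicator_of_mem hm, Pi.one_apply, mul_one,
      ← ENNReal.ofReal_add hW0 (by linarith [log_nonneg (by norm_num : (1 : ℝ) ≤ 2)])]
    apply ENNReal.ofReal_le_ofReal
    have h1 : log 2 + log (u ^ 2) ≤ log (1 / 400 + u ^ 2) := by
      rw [← log_mul (by norm_num) hu2.ne']
      apply log_le_log (by positivity)
      nlinarith [hm.1, hm.2]
    linarith
  · rw [indicator_of_notMem hm, mul_zero, add_zero]
    apply ENNReal.ofReal_le_ofReal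
    have h1 : log (u ^ 2) ≤ log (1 / 400 + u ^ 2) := log_le_log hu2 (by linarith)
    linarith

/-- Moving one of two superposed semicircle laws horizontally by `1 / 20` strictly lowers their
mutual energy: the gain `log 2 / 160` near the diagonal beats the cost `7 / 2000`. -/
lemma cross_energy_lt {Ω : ℝ → ℝ} (hnn : ∀ θ, 0 ≤ Ω θ) (hle : ∀ θ, Ω θ ≤ 1 / 1000) {v : ℝ}
    (hv : v ^ 2 = 1 / 400) : ∫⁻ a, ∫⁻ b, WlogKernel Ω (v, a - b) ∂sg ∂sg < E1 sg := by
  set I : ℝ → ℝ≥0∞ := (Icc (-(1 / 20) : ℝ) (1 / 20)).indicator 1 with hI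
  have hIm : Measurable I := measurable_one.indicator measurableSet_Icc
  have hIp : Measurable fun p : ℝ × ℝ => ENNReal.ofReal (log 2 / 2) * I (p.1 - p.2) :=
    (hIm.comp (by fun_prop)).const_mul _
  have hint : (∫⁻ a, ∫⁻ b, WlogKernel Ω (v, a - b) ∂sg ∂sg) +
      ENNReal.ofReal (log 2 / 2) * ENNReal.ofReal (1 / 80) ≤ E1 sg + ENNReal.ofReal (7 / 2000) := by
    calc _ ≤ (∫⁻ a, ∫⁻ b, WlogKernel Ω (v, a - b) ∂sg ∂sg) +
          ∫⁻ a, ∫⁻ b, ENNReal.ofReal (log 2 / 2) * I (a - b) ∂sg ∂sg := by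
          simp_rw [lintegral_const_mul' _ _ ENNReal.ofReal_ne_top]
          gcongr
          exact strip_mass
      _ = ∫⁻ a, ∫⁻ b, (WlogKernel Ω (v, a - b) + ENNReal.ofReal (log 2 / 2) * I (a - b))
          ∂sg ∂sg := by
          have h1 : Measurable fun a => ∫⁻ b, ENNReal.ofReal (log 2 / 2) * I (a - b) ∂sg :=
            hIp.lintegral_prod_right'
          rw [← lintegral_add_right _ h1]
          refine lintegral_congr fun a => ?_
          have h2 : Measurable fun b => ENNReal.ofReal (log 2 / 2) * I (a - b) :=
            (hIm.comp (by fun_prop)).const_mul _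
          rw [lintegral_add_right _ h2]
      _ ≤ ∫⁻ a, ∫⁻ b, (w1 (a - b) + ENNReal.ofReal (7 / 2000)) ∂sg ∂sg :=
          lintegral_mono fun a => lintegral_mono fun b => kernel_shift_le hnn hle hv _
      _ = _ := by
          have h3 : ∀ a, ∫⁻ b, (w1 (a - b) + ENNReal.ofReal (7 / 2000)) ∂sg =
              (∫⁻ b, w1 (a - b) ∂sg) + ENNReal.ofReal (7 / 2000) := by
            intro a
            rw [lintegral_add_right _ measurable_const]
            simp
          simp_rw [h3]
          rw [lintegral_add_right _ measurable_const]
          simp [E1]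
  by_contra! hge
  have h4 := (add_le_add_left hge _).trans hint
  rw [ENNReal.add_le_add_iff_left E1_sg_lt_top.ne,
    ← ENNReal.ofReal_mul (by linarith [log_two_gt_d9]), ENNReal.ofReal_le_ofReal_iff (by norm_num)]
    at h4
  linarith [log_two_gt_d9]

lemma lintegral_pair {K : ℝ × ℝ → ℝ≥0∞} (hK : Measurable K) (A B : Measure (ℝ × ℝ)) [SFinite A]
    [SFinite B] (r : ℝ≥0∞) : ∫⁻ x, ∫⁻ y, K (x - y) ∂(r • A + r • B) ∂(r • A + r • B) =
      r * r * ((∫⁻ x, ∫⁻ y, K (x - y) ∂A ∂A) + (∫⁻ x, ∫⁻ y, K (x - y) ∂B ∂A) +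
        ((∫⁻ x, ∫⁻ y, K (x - y) ∂A ∂B) + ∫⁻ x, ∫⁻ y, K (x - y) ∂B ∂B)) := by
  have hp : Measurable fun p : (ℝ × ℝ) × (ℝ × ℝ) => K (p.1 - p.2) := hK.comp (by fun_prop)
  have hA : Measurable fun x => ∫⁻ y, K (x - y) ∂A := hp.lintegral_prod_right'
  have hB : Measurable fun x => ∫⁻ y, K (x - y) ∂B := hp.lintegral_prod_right'
  simp only [lintegral_add_measure, lintegral_smul_measure, smul_eq_mul]
  simp_rw [← mul_add]
  have hAB : Measurable fun x => (∫⁻ y, K (x - y) ∂A) + ∫⁻ y, K (x - y) ∂B := hA.add hB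
  rw [lintegral_const_mul _ hAB, lintegral_const_mul _ hAB, lintegral_add_left hA, lintegral_add_left hA]
  ring

/-- When the angular profile is small, two half-mass vertical semicircles at horizontal
distance `1/20` have less energy than a single one. -/
lemma not_minimizer_of_small {Ω : ℝ → ℝ} (hm : Measurable Ω) (hper : ∀ θ, Ω (θ + π) = Ω θ)
    (h0 : Ω (π / 2) = 0) (hnn : ∀ θ, 0 ≤ Ω θ) (hle : ∀ θ, Ω θ ≤ 1 / 1000) :
    ¬ IsMinimizer (energyLog Ω) rho1Dlog := by
  rintro ⟨-, hmin⟩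
  set A := Measure.map (fun t : ℝ => ((1 / 40 : ℝ), t)) sg with hA
  set B := Measure.map (fun t : ℝ => (-(1 / 40 : ℝ), t)) sg with hB
  have : IsProbabilityMeasure A := Measure.isProbabilityMeasure_map (by fun_prop)
  have : IsProbabilityMeasure B := Measure.isProbabilityMeasure_map (by fun_prop)
  have hP : IsProbabilityMeasure ((2⁻¹ : ℝ≥0∞) • A + (2⁻¹ : ℝ≥0∞) • B) :=
    ⟨by simp [ENNReal.inv_two_add_inv_two]⟩
  have h := hmin _ hP
  have hb : 0 ≤ Ω (π / 2) := h0.ge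
  have eA : MeasurableEmbedding fun t : ℝ => ((1 / 40 : ℝ), t) := measurableEmbedding_prodMk_left _
  have eB : MeasurableEmbedding fun t : ℝ => (-(1 / 40 : ℝ), t) :=
    measurableEmbedding_prodMk_left _
  have hAB : ∫⁻ x, ∫⁻ y, WlogKernel Ω (x - y) ∂B ∂A < E1 sg := by
    rw [hA, hB, eA.lintegral_map]
    simp_rw [eB.lintegral_map, Prod.mk_sub_mk]
    exact cross_energy_lt hnn hle (by norm_num)
  have hBA : ∫⁻ x, ∫⁻ y, WlogKernel Ω (x - y) ∂A ∂B < E1 sg := by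
    rw [hA, hB, eB.lintegral_map]
    simp_rw [eA.lintegral_map, Prod.mk_sub_mk]
    exact cross_energy_lt hnn hle (by norm_num)
  rw [energyLog_rho hper hb, energyLog, half_mul_le_iff, lintegral_pair (measurable_kernel hm),
    energy_line hper hb, energy_line hper hb, h0, ENNReal.ofReal_zero, add_zero] at h
  have hE := E1_sg_lt_top.ne
  have h1 : E1 sg + (∫⁻ x, ∫⁻ y, WlogKernel Ω (x - y) ∂B ∂A) +
      ((∫⁻ x, ∫⁻ y, WlogKernel Ω (x - y) ∂A ∂B) + E1 sg) < 4 * E1 sg := by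
    calc _ < E1 sg + E1 sg + (E1 sg + E1 sg) :=
          ENNReal.add_lt_add (ENNReal.add_lt_add_left hE hAB) (ENNReal.add_lt_add_right hE hBA)
      _ = _ := by ring
  have h2 : (2⁻¹ * 2⁻¹ : ℝ≥0∞) * (4 * E1 sg) = E1 sg := by
    rw [← mul_assoc, ← ENNReal.mul_inv (by simp) (by simp)]
    norm_num
    rw [ENNReal.inv_mul_cancel (by simp) (by simp), one_mul]
  refine absurd h (not_le.2 ?_)
  conv_rhs => rw [← h2]
  exact (ENNReal.mul_lt_mul_iff_right (by simp) (by
    exact ENNReal.mul_ne_top (by simp) (by simp))).2 h1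

/-- The part of the kernel that is linear in the angular profile. -/
lemma kernel_split {ω : ℝ → ℝ} (hnn : ∀ θ, 0 ≤ ω θ) {β δ : ℝ} (hβ : 0 ≤ β) (hδ : 0 ≤ δ)
    (x : ℝ × ℝ) : WlogKernel (fun θ => (β + δ) * ω θ) x =
      WlogKernel (fun θ => β * ω θ) x + ENNReal.ofReal δ * ENNReal.ofReal (ω (ang x)) := by
  by_cases hx : x = 0
  · simp [WlogKernel, hx]
  · have h1 := w1_nonneg (nrm_pos hx).ne'
    have h2 : 0 ≤ β * ω (ang x) := mul_nonneg hβ (hnn _)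
    rw [WlogKernel, WlogKernel, if_neg hx, if_neg hx, ← ENNReal.ofReal_mul hδ,
      ← ENNReal.ofReal_add (by rw [Wlog]; linarith) (mul_nonneg hδ (hnn _)), Wlog, Wlog]
    congr 1
    ring

/-- Raising the parameter from `β` to `β + δ` adds `δ` times the angular energy. -/
lemma double_split {ω : ℝ → ℝ} (hm : Measurable ω) (hnn : ∀ θ, 0 ≤ ω θ) {β δ : ℝ} (hβ : 0 ≤ β)
    (hδ : 0 ≤ δ) (μ : Measure (ℝ × ℝ)) [SFinite μ] :
    ∫⁻ x, ∫⁻ y, WlogKernel (fun θ => (β + δ) * ω θ) (x - y) ∂μ ∂μ =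
      (∫⁻ x, ∫⁻ y, WlogKernel (fun θ => β * ω θ) (x - y) ∂μ ∂μ) +
        ENNReal.ofReal δ * ∫⁻ x, ∫⁻ y, ENNReal.ofReal (ω (ang (x - y))) ∂μ ∂μ := by
  have hwm : Measurable fun x => ENNReal.ofReal (ω (ang x)) :=
    (hm.comp measurable_ang).ennreal_ofReal
  have hp : Measurable fun p : (ℝ × ℝ) × (ℝ × ℝ) => ENNReal.ofReal (ω (ang (p.1 - p.2))) :=
    hwm.comp (by fun_prop)
  have h1 : Measurable fun x => ∫⁻ y, ENNReal.ofReal (ω (ang (x - y))) ∂μ :=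
    hp.lintegral_prod_right'
  rw [← lintegral_const_mul _ h1, ← lintegral_add_right _ (h1.const_mul _)]
  refine lintegral_congr fun x => ?_
  have h2 : Measurable fun y => ENNReal.ofReal (ω (ang (x - y))) := hwm.comp (by fun_prop)
  rw [← lintegral_const_mul _ h2, ← lintegral_add_right _ (h2.const_mul _)]
  exact lintegral_congr fun y => kernel_split hnn hβ hδ _

/-- Minimality at `β` upgrades to unique minimality at every larger parameter: a minimizer there
carries no angular energy, hence has minimal energy for arbitrarily large parameters too. -/
lemma unique_of_minimizer {ω : ℝ → ℝ} (hm : Measurable ω) (hper : ∀ θ, ω (θ + π) = ω θ)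
    (hnn : ∀ θ, 0 ≤ ω θ) (h0 : ω (π / 2) = 0) {g β α : ℝ} (hg : 0 ≤ g)
    (hω : ∀ x : ℝ × ℝ, x ≠ 0 → 7 * qf x ≤ g * ω (ang x)) (hβ : 0 ≤ β) (hβα : β < α)
    (hmin : IsMinimizer (energyLog fun θ => β * ω θ) rho1Dlog) :
    IsUniqueMinimizer (energyLog fun θ => α * ω θ) rho1Dlog := by
  have hrho : ∀ γ, energyLog (fun θ => γ * ω θ) rho1Dlog = (1 / 2 : ℝ≥0∞) * E1 sg := by
    intro γ
    rw [energyLog_rho (fun θ => by rw [hper]) (by simp [h0])]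
    simp [h0]
  obtain ⟨δ, hδ, rfl⟩ : ∃ δ, 0 < δ ∧ α = β + δ := ⟨α - β, by linarith, by ring⟩
  have hlow : ∀ μ : Measure (ℝ × ℝ), IsProbabilityMeasure μ →
      E1 sg ≤ ∫⁻ x, ∫⁻ y, WlogKernel (fun θ => β * ω θ) (x - y) ∂μ ∂μ := by
    intro μ hμ
    have := hmin.2 μ hμ
    rwa [hrho, energyLog, half_mul_le_iff] at this
  refine ⟨⟨inferInstance, fun μ hμ => ?_⟩, fun μ hμ => ?_⟩
  · rw [hrho, energyLog, half_mul_le_iff, double_split hm hnn hβ hδ.le]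
    exact (hlow μ hμ).trans le_self_add
  · have := hμ.1
    have h := hμ.2 rho1Dlog inferInstance
    rw [hrho, energyLog, half_mul_le_iff, double_split hm hnn hβ hδ.le] at h
    set L := ∫⁻ x, ∫⁻ y, WlogKernel (fun θ => β * ω θ) (x - y) ∂μ ∂μ with hL
    set Q := ∫⁻ x, ∫⁻ y, ENNReal.ofReal (ω (ang (x - y))) ∂μ ∂μ with hQ
    have hLE : L ≤ E1 sg := le_self_add.trans h
    have hLfin : L ≠ ⊤ := (hLE.trans_lt E1_sg_lt_top).ne
    have hQ0 : Q = 0 := by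
      have h1 : L + ENNReal.ofReal δ * Q ≤ L + 0 := by
        rw [add_zero]
        exact h.trans (hlow μ this)
      have h2 : ENNReal.ofReal δ * Q = 0 :=
        le_antisymm ((ENNReal.add_le_add_iff_left hLfin).1 h1) zero_le
      exact (mul_eq_zero.1 h2).resolve_left (by simpa using hδ)
    refine line_of_energy_le (Ω := fun θ => (β + g) * ω θ) (fun θ => by rw [hper]) (by simp [h0])
      (fun x hx => ?_) μ ?_
    · have := hω x hx
      have := mul_nonneg hβ (hnn (ang x))
      simp only [h0]
      linarith
    · rw [double_split hm hnn hβ hg, ← hQ, hQ0, ← hL]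
      simpa [h0] using hLE

/-! ### The threshold -/

/-- logarithmic analogue of the strong coercivity theorem: there is a
constant `C*` such that `Ω(θ) ≥ Ω(π/2) + C*|θ-π/2|²` forces the vertical semicircle law
`ρ_{1D}` to be the unique minimizer of `E_log` up to translation, and for the family
`W_{log,α}` there is a sharp threshold `α* ∈ (0, C*/c_ω]`. -/
theorem statement17 :
    ∃ Cstar : ℝ, 0 < Cstar ∧
      (∀ Ω : ℝ → ℝ, SatisfiesH Ω →
        (∀ θ ∈ Set.Icc (0 : ℝ) π, Ω (π / 2) + Cstar * |θ - π / 2| ^ 2 ≤ Ω θ) →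
        IsUniqueMinimizer (energyLog Ω) rho1Dlog) ∧
      (∀ ω : ℝ → ℝ, Satisfiesh ω → ∀ cω : ℝ, 0 < cω →
        (∀ θ ∈ Set.Icc (0 : ℝ) π, cω * |θ - π / 2| ^ 2 ≤ ω θ) →
        ∃! αs : ℝ, (0 < αs ∧ αs ≤ Cstar / cω) ∧
          (∀ α : ℝ, αs < α →
            IsUniqueMinimizer (energyLog fun θ => α * ω θ) rho1Dlog) ∧
          (∀ α : ℝ, 0 < α → α < αs →
            ¬ IsMinimizer (energyLog fun θ => α * ω θ) rho1Dlog)) := by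
  refine ⟨7, by norm_num, ?_, ?_⟩
  · rintro Ω ⟨-, -, hpos, hper⟩ hΩ
    exact unique_minimizer_of_bound hper (hpos _).le
      fun x hx => angle_bound (by norm_num) hper hΩ hx
  · rintro ω ⟨hsm, hper2, hnn, -, hper, h0⟩ c hc hω
    have hcont : Continuous ω := hsm.continuous
    have hm : Measurable ω := hcont.measurable
    have hbound : ∀ x : ℝ × ℝ, x ≠ 0 → 7 * qf x ≤ 7 / c * ω (ang x) := by
      intro x hx
      have h := angle_bound (Ω := ω) hc.le hper (by simpa [h0] using hω) hx
      rw [h0, zero_add] at h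
      rw [div_mul_eq_mul_div, le_div_iff₀ hc]
      linarith
    -- `ω` is bounded, so `α ω ≤ 1 / 1000` for small `α`
    obtain ⟨M, hM0, hM⟩ : ∃ M : ℝ, 0 < M ∧ ∀ θ, ω θ ≤ M := by
      have hp : Function.Periodic ω π := hper
      obtain ⟨M, hM⟩ := (isCompact_Icc (a := (0 : ℝ)) (b := π)).bddAbove_image hcont.continuousOn
      refine ⟨max M 1, by positivity, fun θ => ?_⟩
      obtain ⟨y, hy, hyθ⟩ := hp.exists_mem_Ico₀ pi_pos θ
      rw [hyθ]
      exact (hM ⟨y, Ico_subset_Icc_self hy, rfl⟩).trans (le_max_left _ _)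
    -- the threshold is the infimum of the parameters at which `rho1Dlog` is a minimizer
    set S : Set ℝ := {α | 0 < α ∧ IsMinimizer (energyLog fun θ => α * ω θ) rho1Dlog} with hS
    have hmem : 7 / c ∈ S := by
      refine ⟨by positivity, (unique_minimizer_of_bound (fun θ => by rw [hper]) (by simp [h0])
        fun x hx => ?_).1⟩
      simpa [h0] using hbound x hx
    have hlow : ∀ α ∈ S, 1 / (1000 * M) ≤ α := by
      rintro α ⟨hα, hmin⟩
      by_contra! hlt
      rw [lt_div_iff₀ (by positivity)] at hlt
      refine not_minimizer_of_small (Ω := fun θ => α * ω θ) (hm.const_mul α)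
        (fun θ => by rw [hper]) (by simp [h0]) (fun θ => mul_nonneg hα.le (hnn θ))
        (fun θ => ?_) hmin
      have := mul_le_mul_of_nonneg_left (hM θ) hα.le
      linarith
    have hbdd : BddBelow S := ⟨_, hlow⟩
    have hup : ∀ α, sInf S < α → IsUniqueMinimizer (energyLog fun θ => α * ω θ) rho1Dlog := by
      intro α hα
      obtain ⟨β, hβ, hβα⟩ := exists_lt_of_csInf_lt ⟨_, hmem⟩ hα
      exact unique_of_minimizer hm hper hnn h0 (by positivity) hbound hβ.1.le hβα hβ.2
    have hdown : ∀ α, 0 < α → α < sInf S →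
        ¬ IsMinimizer (energyLog fun θ => α * ω θ) rho1Dlog :=
      fun α hα hlt hmin => notMem_of_lt_csInf hlt hbdd ⟨hα, hmin⟩
    have hpos : 0 < sInf S := lt_of_lt_of_le (by positivity) (le_csInf ⟨_, hmem⟩ hlow)
    refine ⟨sInf S, ⟨⟨hpos, csInf_le hbdd hmem⟩, hup, hdown⟩, ?_⟩
    rintro a ⟨⟨ha, -⟩, haup, hadown⟩
    rcases lt_trichotomy a (sInf S) with h | h | h
    · exact absurd (haup ((a + sInf S) / 2) (by linarith)).1
        (hdown _ (by linarith) (by linarith))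
    · exact h
    · exact absurd (hup ((a + sInf S) / 2) (by linarith)).1
        (hadown _ (by linarith) (by linarith))

end Aniso
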